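/- arXiv:math/0607428 — 4 statements merged into one kernel-verified Lean document; each statement's English description precedes it below -/
import Mathlib

section
/- Let (W,S) be a Coxeter system of finite rank with Coxeter matrix m, and let s and t be distinct elements of S with m(s,t) < ∞. Assume that for every r ∈ S∖{s,t} with both m(r,s) < ∞ and m(r,t) < ∞, the greatest common divisor gcd(m(r,s), m(r,t)) is greater than 1. Let N be the normal closure in W of the element st. Then W/N, together with the images of the elements of S∖{t}, is a Coxeter system on the set S' = S∖{t} whose Coxeter matrix m' is given by: m'(u,v) = m(u,v) for u,v ∈ S∖{s,t}; and m'(r,s) = gcd(m(r,s), m(r,t)) for r ∈ S∖{s,t}, where gcd(k,∞) = k, gcd(∞,k) = k, and gcd(∞,∞) = ∞. -/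
/-!
The argument takes place at the level of presentations. Adding the relator `st` to the Coxeter
presentation of `W` identifies `t` with `s`, so `t` can be eliminated; the relators involving `r`
and `s` or `t` then become `(rs) ^ m(r,s)` and `(rs) ^ m(r,t)`, which together are equivalent to
the single relator `(rs) ^ gcd(m(r,s), m(r,t))`. The convention that `0` encodes `∞` is compatible
with `Nat.gcd`, because `gcd 0 k = k`. The hypothesis on greatest common divisors makes the
resulting matrix a Coxeter matrix, and the universal properties of the two presentations give
mutually inverse homomorphisms between `W ⧸ N` and the Coxeter group of this matrix.
-/

variable {W : Type*} [Group W]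

/-- `S` is a set of Coxeter generators of the group `W`, with Coxeter matrix given by the
restriction of `m` to `S × S` (the value `0` of `m` encodes `∞`). -/
def IsCoxeterSystemOn (m : W → W → ℕ) (S : Set W) : Prop :=
  ∃ (cm : CoxeterMatrix S) (cs : CoxeterSystem cm W),
    (∀ s : S, cs.simple s = (s : W)) ∧ ∀ s t : S, cm.M s t = m s t

/-- The subset `B` is irreducible: its Coxeter diagram (edges between distinct `x, y` with
`m x y > 2`, including `m x y = ∞`, i.e. `m x y = 0`) is nonempty and connected. -/
def IsIrreducibleOn (m : W → W → ℕ) (B : Set W) : Prop :=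
  B.Nonempty ∧ ∀ u ∈ B, ∀ v ∈ B,
    Relation.ReflTransGen
      (fun x y => x ∈ B ∧ y ∈ B ∧ x ≠ y ∧ (m x y = 0 ∨ 2 < m x y)) u v

/-- `B` is a base of the Coxeter system `(W, S)`: the visual subgroup `⟨B⟩` is a noncyclic,
maximal, finite, irreducible visual subgroup. -/
def IsBase (m : W → W → ℕ) (S B : Set W) : Prop :=
  B ⊆ S ∧ IsIrreducibleOn m B ∧ (Subgroup.closure B : Set W).Finite ∧
    ¬ IsCyclic ↥(Subgroup.closure B) ∧
    ∀ B' : Set W, B' ⊆ S → B ⊆ B' → IsIrreducibleOn m B' →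
      (Subgroup.closure B' : Set W).Finite → B' = B

/-- The base `B` matches the base `B'`: the commutator subgroups of the visual subgroups
`⟨B⟩` and `⟨B'⟩` are conjugate in `W`. -/
def Matches (B B' : Set W) : Prop :=
  ∃ w : W,
    Subgroup.map ((MulAut.conj w).toMonoidHom)
        (⁅Subgroup.closure B, Subgroup.closure B⁆ : Subgroup W)
      = ⁅Subgroup.closure B', Subgroup.closure B'⁆

/-- `(⟨B⟩, B)` has the isomorphism type of the Coxeter system of the Coxeter matrix `std`. -/
def HasType (m : W → W → ℕ) (B : Set W) {n : ℕ} (std : Fin n → Fin n → ℕ) : Prop :=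
  ∃ e : ↥B ≃ Fin n, ∀ u v : ↥B, m u v = std (e u) (e v)

/-- The Coxeter matrix of type `Aₙ` (Coxeter's notation): linear diagram, all labels 3. -/
def aMat (n : ℕ) : Fin n → Fin n → ℕ := fun i j =>
  if i = j then 1 else if i.val + 1 = j.val ∨ j.val + 1 = i.val then 3 else 2

/-- The Coxeter matrix of type `Cₙ` in Coxeter's notation (Bourbaki's `Bₙ`):
linear diagram with labels 3, …, 3, 4. -/
def cMat (n : ℕ) : Fin n → Fin n → ℕ := fun i j =>
  if i = j then 1
  else if i.val + 1 = j.val ∨ j.val + 1 = i.val then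
    (if i.val + 1 = n ∨ j.val + 1 = n then 4 else 3)
  else 2

/-- The Coxeter matrix of type `Bₙ` in Coxeter's notation (Bourbaki's `Dₙ`), for `n ≥ 3`:
a chain `0, …, n-2` with labels 3 together with the edge `{n-3, n-1}` labelled 3. -/
def bMat (n : ℕ) : Fin n → Fin n → ℕ := fun i j =>
  if i = j then 1
  else if ((i.val + 1 = j.val ∧ j.val + 2 ≤ n) ∨ (j.val + 1 = i.val ∧ i.val + 2 ≤ n))
      ∨ (i.val + 3 = n ∧ j.val + 1 = n) ∨ (j.val + 3 = n ∧ i.val + 1 = n) then 3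
  else 2

/-- The dihedral Coxeter matrix `D₂(k)` (i.e. `I₂(k)`). -/
def d2Mat (k : ℕ) : Fin 2 → Fin 2 → ℕ := fun i j => if i = j then 1 else k

/-- The Coxeter matrix of type `G₃` in Coxeter's notation (i.e. `H₃`). -/
def g3Mat : Fin 3 → Fin 3 → ℕ := ![![1,3,2], ![3,1,5], ![2,5,1]]

/-- The Coxeter matrix of type `G₄` in Coxeter's notation (i.e. `H₄`). -/
def g4Mat : Fin 4 → Fin 4 → ℕ := ![![1,3,2,2], ![3,1,3,2], ![2,3,1,5], ![2,2,5,1]]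

/-- The Coxeter matrix of type `F₄`. -/
def f4Mat : Fin 4 → Fin 4 → ℕ := ![![1,3,2,2], ![3,1,4,2], ![2,4,1,3], ![2,2,3,1]]

/-- The 2-part of `k`: the largest power of 2 dividing `k` (with `0` encoding `∞`;
the 2-part of `∞` is `∞`). -/
def twoPart (k : ℕ) : ℕ := if k = 0 then 0 else 2 ^ (k.factorization 2)

/-- The subgroup `N_b`: the normal closure in `W` of the elements `(st) ^ b(s,t)` for
`s, t ∈ S` with `m s t < ∞`, where `b(s,t)` is the 2-part of `m s t`. -/
def NbSubgroup (m : W → W → ℕ) (S : Set W) : Subgroup W :=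
  Subgroup.normalClosure
    {x | ∃ s ∈ S, ∃ t ∈ S, m s t ≠ 0 ∧ x = (s * t) ^ twoPart (m s t)}

instance (m : W → W → ℕ) (S : Set W) : (NbSubgroup m S).Normal :=
  Subgroup.normalClosure_normal

/-- `(a, b)` is a special pair of elements of `S`: `m a b ≡ 2 mod 4` and either `v = a` or
`v = b` has the property that `m s a = m s b = 2` for every `s ∈ S \ {a, b}` with
`m s v < ∞`. -/
def IsSpecialPair (m : W → W → ℕ) (S : Set W) (a b : W) : Prop :=
  a ∈ S ∧ b ∈ S ∧ a ≠ b ∧ m a b % 4 = 2 ∧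
    ((∀ s ∈ S, s ≠ a → s ≠ b → m s a ≠ 0 → m s a = 2 ∧ m s b = 2) ∨
     (∀ s ∈ S, s ≠ a → s ≠ b → m s b ≠ 0 → m s a = 2 ∧ m s b = 2))

open scoped Classical in
/-- `m̄ a b = 2` if `(a, b)` is a special pair and `m̄ a b = m a b` otherwise. -/
noncomputable def mbar (m : W → W → ℕ) (S : Set W) (a b : W) : ℕ :=
  if IsSpecialPair m S a b then 2 else m a b

/-- The subgroup `N_e`: the normal closure in `W` of the elements `st` with `m s t` odd
together with the elements `(ab)²` with `(a, b)` a special pair. -/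
def NeSubgroup (m : W → W → ℕ) (S : Set W) : Subgroup W :=
  Subgroup.normalClosure
    ({x | ∃ s ∈ S, ∃ t ∈ S, Odd (m s t) ∧ x = s * t} ∪
     {x | ∃ a b : W, IsSpecialPair m S a b ∧ x = (a * b) ^ 2})

instance (m : W → W → ℕ) (S : Set W) : (NeSubgroup m S).Normal :=
  Subgroup.normalClosure_normal

/-- The word length of `w` with respect to the generating set `B`. -/
noncomputable def wordLength (B : Set W) (w : W) : ℕ :=
  sInf {n | ∃ l : List W, (∀ x ∈ l, x ∈ B) ∧ l.length = n ∧ l.prod = w}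

/-- `z` is a longest element of the visual subgroup `⟨B⟩`. -/
def IsLongestElement (B : Set W) (z : W) : Prop :=
  z ∈ Subgroup.closure B ∧
    ∀ w ∈ Subgroup.closure B, wordLength B w ≤ wordLength B z

/-- The basic subgroup `⟨B⟩` of `(W, S)` is reduced: for every set of Coxeter generators `S'`
of `W`, any base of `(W, S')` matching `B` generates a subgroup of order at least `|⟨B⟩|`. -/
def IsReducedBase (m : W → W → ℕ) (S B : Set W) : Prop :=
  ∀ (S' : Set W) (m' : W → W → ℕ) (B' : Set W),
    IsCoxeterSystemOn m' S' → S'.Finite → IsBase m' S' B' → Matches B B' →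
      Nat.card ↥(Subgroup.closure B) ≤ Nat.card ↥(Subgroup.closure B')

/-- The isomorphism type of `(⟨B⟩, B)` belongs to the family `F` of isomorphism types of
Coxeter systems (a family of Coxeter matrices). -/
def TypeIn (F : ∀ n : ℕ, (Fin n → Fin n → ℕ) → Prop) (m : W → W → ℕ) (B : Set W) : Prop :=
  ∃ (n : ℕ) (Mt : Fin n → Fin n → ℕ), F n Mt ∧ HasType m B Mt

/-- The subgroup `N(F)`: the normal closure in `W` of the commutator subgroups of all
reduced basic subgroups of `(W, S)` of type in `F` together with the commutator subgroups of
all unreduced basic subgroups of `(W, S)` matching a reduced basic subgroup of type in `F`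
of another system `(W, S')`. -/
def NFSubgroup (F : ∀ n : ℕ, (Fin n → Fin n → ℕ) → Prop)
    (m : W → W → ℕ) (S : Set W) : Subgroup W :=
  Subgroup.normalClosure
    {x | ∃ B : Set W, IsBase m S B ∧
      x ∈ (⁅Subgroup.closure B, Subgroup.closure B⁆ : Subgroup W) ∧
      ((IsReducedBase m S B ∧ TypeIn F m B) ∨
       (¬ IsReducedBase m S B ∧ ∃ (S' : Set W) (m' : W → W → ℕ) (B' : Set W),
          IsCoxeterSystemOn m' S' ∧ S'.Finite ∧ IsBase m' S' B' ∧
          IsReducedBase m' S' B' ∧ TypeIn F m' B' ∧ Matches B B'))}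

instance (F : ∀ n : ℕ, (Fin n → Fin n → ℕ) → Prop) (m : W → W → ℕ) (S : Set W) :
    (NFSubgroup F m S).Normal :=
  Subgroup.normalClosure_normal

/-- The normal closure, within the subgroup `H`, of the subset `X ⊆ H`,
as a subgroup of the ambient group. -/
def nClosIn (H : Subgroup W) (X : Set W) : Subgroup W :=
  Subgroup.map H.subtype (Subgroup.normalClosure ((fun x : H => (x : W)) ⁻¹' X))

/-- The generating set for the subgroup `N(⟨B⟩)` of a basic subgroup `⟨B⟩` of rank at least 3:
the commutator subgroup of `⟨B⟩` if the rank is at least 5 or the type is `A₄`, `G₃` or `G₄`;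
`a₁a₃` for type `A₃`; `b₁b₂, b₂b₃` (products of distinct commuting generators) for type `B₄`;
`(c₂c₃)²` for type `C₃`; `c₁c₃` for type `C₄`; and `(f₂f₃)²` for type `F₄`. -/
def genSetNB (m : W → W → ℕ) (B : Set W) : Set W :=
  {x | ((5 ≤ B.ncard ∨ HasType m B (aMat 4) ∨ HasType m B g3Mat ∨ HasType m B g4Mat) ∧
          x ∈ (⁅Subgroup.closure B, Subgroup.closure B⁆ : Subgroup W)) ∨
       (HasType m B (aMat 3) ∧ ∃ u ∈ B, ∃ v ∈ B, u ≠ v ∧ m u v = 2 ∧ x = u * v) ∨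
       (HasType m B (bMat 4) ∧ ∃ u ∈ B, ∃ v ∈ B, u ≠ v ∧ m u v = 2 ∧ x = u * v) ∨
       (HasType m B (cMat 3) ∧ ∃ u ∈ B, ∃ v ∈ B, m u v = 4 ∧ x = (u * v) ^ 2) ∨
       (HasType m B (cMat 4) ∧ ∃ u ∈ B, ∃ p ∈ B, ∃ v ∈ B, ∃ q ∈ B,
          m u p = 3 ∧ m p v = 3 ∧ m v q = 4 ∧ m u v = 2 ∧ x = u * v) ∨
       (HasType m B f4Mat ∧ ∃ u ∈ B, ∃ v ∈ B, m u v = 4 ∧ x = (u * v) ^ 2)}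

/-- The subgroup `N(⟨B⟩)` of the visual subgroup `⟨B⟩`, viewed as a subgroup of `W`. -/
def NBSubgroup (m : W → W → ℕ) (B : Set W) : Subgroup W :=
  nClosIn (Subgroup.closure B) (genSetNB m B)

/-- The subgroup `N(W)`: the normal closure in `W` of the subgroups `N(⟨B⟩)` over all
bases `B` of `(W, S)` of rank greater than 2. -/
def NWSubgroup (m : W → W → ℕ) (S : Set W) : Subgroup W :=
  Subgroup.normalClosure
    {x | ∃ B : Set W, IsBase m S B ∧ 2 < B.ncard ∧ x ∈ NBSubgroup m B}

instance (m : W → W → ℕ) (S : Set W) : (NWSubgroup m S).Normal :=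
  Subgroup.normalClosure_normal

open scoped Classical in
/-- The Coxeter matrix on `S \ {t}` obtained by merging `t` into `s`: the entry at `r` and `s` is
`gcd (m r s) (m r t)`, and all other off-diagonal entries are those of `m`. -/
noncomputable def mergedMatrix (m : W → W → ℕ) (S : Set W) (s t : W) (hs : s ∈ S) (ht : t ∈ S)
    (hsymm : ∀ u ∈ S, ∀ v ∈ S, m u v = m v u)
    (hoff : ∀ u ∈ S, ∀ v ∈ S, u ≠ v → m u v ≠ 1)
    (hgcd : ∀ r ∈ S, r ≠ s → r ≠ t → m r s ≠ 0 → m r t ≠ 0 →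
      1 < Nat.gcd (m r s) (m r t)) : CoxeterMatrix ↥(S \ {t}) where
  M u v := if u = v then 1 else if (u : W) = s then Nat.gcd (m v s) (m v t)
    else if (v : W) = s then Nat.gcd (m u s) (m u t) else m u v
  isSymm := by
    refine Matrix.IsSymm.ext fun u v => ?_
    by_cases huv : u = v
    · simp [huv]
    have h2 : (u : W) ≠ v := fun h => huv (Subtype.ext h)
    have h3 := hsymm u u.2.1 v v.2.1
    rw [if_neg huv, if_neg (Ne.symm huv)]
    split_ifs <;> simp_all
  diagonal := by simp
  off_diagonal := by
    have key : ∀ r ∈ S, r ≠ s → r ≠ t → Nat.gcd (m r s) (m r t) ≠ 1 := by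
      intro r hr hrs hrt
      by_cases h1 : m r s = 0
      · simpa [h1] using hoff r hr t ht hrt
      by_cases h2 : m r t = 0
      · simpa [h2] using hoff r hr s hs hrs
      exact (hgcd r hr hrs hrt h1 h2).ne'
    intro u v huv
    have h2 : (u : W) ≠ v := fun h => huv (Subtype.ext h)
    rw [if_neg huv]
    split_ifs with h3 h4
    · exact key v v.2.1 (fun h => h2 (h3.trans h.symm)) v.2.2
    · exact key u u.2.1 h3 u.2.2
    · exact hoff u u.2.1 v v.2.1 h2

/-- **Edge elimination.** -/
theorem edge_elimination (m : W → W → ℕ) (S : Set W)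
    (hcs : IsCoxeterSystemOn m S) (hfin : S.Finite)
    (s t : W) (hs : s ∈ S) (ht : t ∈ S) (hst : s ≠ t) (hmst : m s t ≠ 0)
    (hgcd : ∀ r ∈ S, r ≠ s → r ≠ t → m r s ≠ 0 → m r t ≠ 0 →
      1 < Nat.gcd (m r s) (m r t)) :
    ∃ (cm' : CoxeterMatrix ↥(S \ {t}))
      (cs' : CoxeterSystem cm' (W ⧸ Subgroup.normalClosure {s * t})),
      (∀ u : ↥(S \ {t}), cs'.simple u = QuotientGroup.mk (u : W)) ∧
      (∀ u v : ↥(S \ {t}), (u : W) ≠ s → (v : W) ≠ s →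
        cm'.M u v = m (u : W) (v : W)) ∧
      (∀ r : ↥(S \ {t}), (r : W) ≠ s →
        cm'.M r ⟨s, hs, hst⟩ = Nat.gcd (m (r : W) s) (m (r : W) t)) := by
  classical
  obtain ⟨cm, cs, hsim, hM⟩ := hcs
  have hsymm : ∀ u ∈ S, ∀ v ∈ S, m u v = m v u := fun u hu v hv => by
    rw [← hM ⟨u, hu⟩ ⟨v, hv⟩, ← hM ⟨v, hv⟩ ⟨u, hu⟩, cm.symmetric]
  have hdiag : ∀ u ∈ S, m u u = 1 := fun u hu => by
    rw [← hM ⟨u, hu⟩ ⟨u, hu⟩]; exact cm.diagonal _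
  have hoff : ∀ u ∈ S, ∀ v ∈ S, u ≠ v → m u v ≠ 1 := fun u hu v hv huv => by
    rw [← hM ⟨u, hu⟩ ⟨v, hv⟩]
    exact cm.off_diagonal _ _ fun h => huv (congrArg Subtype.val h)
  let cm' := mergedMatrix m S s t hs ht hsymm hoff hgcd
  have hself : ∀ u : ↥(S \ {t}), cm'.M u u = 1 := cm'.diagonal
  have hrest : ∀ u v : ↥(S \ {t}), (u : W) ≠ s → (v : W) ≠ s → cm'.M u v = m u v := by
    intro u v hu hv
    by_cases huv : u = v
    · subst huv; rw [hself, hdiag _ u.2.1]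
    · simp [cm', mergedMatrix, huv, hu, hv]
  have hmerge : ∀ r : ↥(S \ {t}), (r : W) ≠ s →
      cm'.M r ⟨s, hs, hst⟩ = Nat.gcd (m (r : W) s) (m (r : W) t) := by
    intro r hr
    have : r ≠ ⟨s, hs, hst⟩ := fun h => hr (congrArg Subtype.val h)
    simp [cm', mergedMatrix, this, hr]
  let cs₀ := cm'.toCoxeterSystem
  have hrel : ∀ (u v : ↥(S \ {t})) (n : ℕ), cm'.M u v ∣ n →
      (cs₀.simple u * cs₀.simple v) ^ n = 1 := by
    rintro u v n ⟨k, rfl⟩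
    rw [pow_mul, cs₀.simple_mul_simple_pow, one_pow]
  -- The retraction of `S` onto `S \ {t}` sending `t` to `s`.
  let p : S → ↥(S \ {t}) := fun u => if h : (u : W) = t then ⟨s, hs, hst⟩ else ⟨u, u.2, h⟩
  have hdvd : ∀ u v : S, cm'.M (p u) (p v) ∣ m u v := by
    -- By symmetry it suffices to treat pairs with `v ∈ {s, t}`, and pairs avoiding both.
    have hA : ∀ u v : S, ((v : W) = s ∨ (v : W) = t) → cm'.M (p u) (p v) ∣ m u v := by
      intro u v hv
      have hpv : p v = ⟨s, hs, hst⟩ := by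
        by_cases h : (v : W) = t
        · simp [p, h]
        · simp only [p, h, dite_false]; exact Subtype.ext (hv.resolve_right h)
      by_cases hu : p u = ⟨s, hs, hst⟩
      · rw [hu, hpv, hself]; exact one_dvd _
      have hut : (u : W) ≠ t := fun h => hu (by simp [p, h])
      have hpu : p u = ⟨u, u.2, hut⟩ := by simp [p, hut]
      have hus : (u : W) ≠ s := fun h => hu (by rw [hpu]; exact Subtype.ext h)
      rw [hpv, hpu, hmerge _ hus]
      rcases hv with hv | hv <;> rw [hv]
      exacts [Nat.gcd_dvd_left _ _, Nat.gcd_dvd_right _ _]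
    intro u v
    by_cases hv : (v : W) = s ∨ (v : W) = t
    · exact hA u v hv
    by_cases hu : (u : W) = s ∨ (u : W) = t
    · rw [hsymm u u.2 v v.2, cm'.symmetric]; exact hA v u hu
    push Not at hu hv
    have hpu : p u = ⟨u, u.2, hu.2⟩ := by simp [p, hu.2]
    have hpv : p v = ⟨v, v.2, hv.2⟩ := by simp [p, hv.2]
    rw [hpu, hpv, hrest _ _ hu.1 hv.1]
  have hlift : cm.IsLiftable fun u => cs₀.simple (p u) := fun u v => by
    refine hrel _ _ _ ?_
    have h := hdvd u v
    rwa [← hM] at h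
  let φ : W →* cm'.Group := cs.lift ⟨_, hlift⟩
  have hφ : ∀ u (hu : u ∈ S), φ u = cs₀.simple (p ⟨u, hu⟩) := fun u hu => by
    have h := cs.lift_apply_simple hlift ⟨u, hu⟩
    rwa [hsim ⟨u, hu⟩] at h
  have hker : Subgroup.normalClosure {s * t} ≤ φ.ker := by
    refine Subgroup.normalClosure_le_normal ?_
    rintro _ rfl
    have h1 : p ⟨s, hs⟩ = ⟨s, hs, hst⟩ := by simp [p, hst]
    have h2 : p ⟨t, ht⟩ = ⟨s, hs, hst⟩ := by simp [p]
    change φ (s * t) = 1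
    rw [map_mul, hφ s hs, hφ t ht, h1, h2, cs₀.simple_mul_simple_self]
  let N : Subgroup W := Subgroup.normalClosure {s * t}
  let f : W ⧸ N →* cm'.Group := QuotientGroup.lift N φ hker
  let q : W →* W ⧸ N := QuotientGroup.mk' N
  have hpow : ∀ u ∈ S, ∀ v ∈ S, (q u * q v) ^ m u v = 1 := fun u hu v hv => by
    have h := cs.simple_mul_simple_pow ⟨u, hu⟩ ⟨v, hv⟩
    rw [hsim ⟨u, hu⟩, hsim ⟨v, hv⟩] at h
    rw [← map_mul, ← map_pow, ← hM ⟨u, hu⟩ ⟨v, hv⟩]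
    exact (congrArg q h).trans (map_one q)
  have hsq : ∀ u ∈ S, q u * q u = 1 := fun u hu => by
    simpa [hdiag u hu] using hpow u hu u hu
  have hqst : q s = q t := by
    have h : q (s * t) = 1 :=
      (QuotientGroup.eq_one_iff _).2 (Subgroup.subset_normalClosure rfl)
    rw [map_mul] at h
    rw [eq_inv_of_mul_eq_one_left h]
    exact (eq_inv_of_mul_eq_one_left (hsq t ht)).symm
  have hlift' : cm'.IsLiftable fun u => q (u : W) := by
    have hB : ∀ u : ↥(S \ {t}),
        (q (u : W) * q s) ^ cm'.M u ⟨s, hs, hst⟩ = 1 := by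
      intro u
      by_cases hu : (u : W) = s
      · rw [hu, hsq s hs, one_pow]
      rw [hmerge u hu]
      refine pow_gcd_eq_one.2 ⟨hpow _ u.2.1 s hs, ?_⟩
      rw [hqst]; exact hpow _ u.2.1 t ht
    have hinv : ∀ u v : ↥(S \ {t}), (q (u : W) * q (v : W))⁻¹ = q (v : W) * q (u : W) :=
      fun u v => by
        rw [mul_inv_rev, ← eq_inv_of_mul_eq_one_left (hsq u u.2.1),
          ← eq_inv_of_mul_eq_one_left (hsq v v.2.1)]
    intro u v
    by_cases hv : (v : W) = s
    · obtain rfl : v = ⟨s, hs, hst⟩ := Subtype.ext hv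
      exact hB u
    by_cases hu : (u : W) = s
    · obtain rfl : u = ⟨s, hs, hst⟩ := Subtype.ext hu
      have h := hB v
      rw [cm'.symmetric, ← inv_eq_one, ← inv_pow, hinv v ⟨s, hs, hst⟩] at h
      exact h
    have h := hpow u u.2.1 v v.2.1
    rw [← hrest u v hu hv] at h
    exact h
  let g : cm'.Group →* W ⧸ N := cs₀.lift ⟨_, hlift'⟩
  have hg : ∀ u, g (cs₀.simple u) = q (u : W) := fun u => cs₀.lift_apply_simple hlift' u
  have hfq : ∀ w, f (q w) = φ w := fun w => rfl
  have hfg : f.comp g = MonoidHom.id _ := by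
    refine cs₀.ext_simple fun u => ?_
    have hpu : p ⟨u, u.2.1⟩ = u := by
      have : (u : W) ≠ t := u.2.2
      simp [p, this]
    rw [MonoidHom.comp_apply, hg, hfq, hφ _ u.2.1, hpu]; rfl
  have hgf : g.comp f = MonoidHom.id _ := by
    refine QuotientGroup.monoidHom_ext _ (cs.ext_simple fun u => ?_)
    change g (f (q (cs.simple u))) = q (cs.simple u)
    rw [hfq, hsim, hφ _ u.2, hg]
    by_cases h : (u : W) = t
    · simp [p, h, hqst]
    · simp [p, h]
  let e : cm'.Group ≃* W ⧸ N := MonoidHom.toMulEquiv g f hfg hgf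
  exact ⟨cm', cs₀.map e, fun u => hg u, hrest, hmerge⟩
end

section
/- Let (W,S) be a Coxeter system of finite rank. Then: (i) the pair (W_b, S_b) is a Coxeter system; (ii) for s,t ∈ S, η(s) = η(t) if and only if s and t are conjugate in W; (iii) if s and t are nonconjugate elements of S, then the order of η(s)η(t) in W_b is the minimum of the set of all b(u,v) such that u,v ∈ S, u is conjugate to s in W, and v is conjugate to t in W (with the order being ∞ if this minimum is ∞); in particular the order of η(s)η(t) is a power of 2 or ∞. -/
/-!
Everything rests on a universal property of the quotient `W ⧸ N_b` (`exists_quotient_hom`): a map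
`f : S → G` extends to it as soon as `(f s * f t) ^ b(s,t) = 1` for all `s, t ∈ S`, since
`b(s,t)` divides `m(s,t)`.

* The order function `(x, y) ↦ orderOf (x * y)` on `S_b` is a Coxeter matrix. The order of
  `η s * η t` divides `b(s,t)`, so the universal property inverts the canonical map from the
  corresponding Coxeter group to `W ⧸ N_b` (`isCoxeterSystemOn_orderOf`).
* If `m(s,t)` is odd, then `s` and `t` are conjugate and `η s = η t`. If `m(s,t)` is even or
  infinite, so is `b(s,t)`. Hence the indicator function of a conjugacy class in `S`, or of a fibre
  of `η` on `S`, extends to a homomorphism to a group of order two, the former on `W ⧸ N_b`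
  and the latter on `W`. The two families separate what has to be separated for
  `η s = η t ↔ s ~ t`.
* If `s` and `t` are not conjugate, let `n` be the minimum of the `b(u,v)` (`0` for `∞`). The values
  `b(u,v)` are powers of `2`, so `n` divides all of them, and sending the class of `s` to one
  generating reflection of the dihedral group of order `2n`, the class of `t` to the other and the
  remaining generators to `1` extends to `W ⧸ N_b`. The image of `η s * η t` has order exactly
  `n`. Since only powers of `2` and `∞` occur, no geometric representation is needed to see that
  the order does not drop.
-/

variable {W : Type*} [Group W]

/-! ### The 2-part of an integer -/

theorem twoPart_dvd (k : ℕ) : twoPart k ∣ k := by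
  unfold twoPart
  split_ifs with h
  · simp [h]
  · exact Nat.ordProj_dvd k 2

theorem twoPart_ne_zero_iff (k : ℕ) : twoPart k ≠ 0 ↔ k ≠ 0 := by
  unfold twoPart
  split_ifs with h <;> simp [h]

theorem exists_twoPart_eq_pow {k : ℕ} (h : k ≠ 0) : ∃ j : ℕ, twoPart k = 2 ^ j :=
  ⟨_, by rw [twoPart, if_neg h]⟩

theorem odd_or_even_twoPart (k : ℕ) : (Odd k ∧ twoPart k = 1) ∨ Even (twoPart k) := by
  rcases Nat.even_or_odd k with h | h
  · right
    by_cases h0 : k = 0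
    · simp [twoPart, h0]
    · rw [twoPart, if_neg h0]
      have : k.factorization 2 ≠ 0 :=
        (Nat.Prime.factorization_pos_of_dvd Nat.prime_two h0 h.two_dvd).ne'
      exact (Nat.even_pow.2 ⟨even_two, this⟩)
  · left
    refine ⟨h, ?_⟩
    have h0 : k ≠ 0 := by rintro rfl; simp at h
    rw [twoPart, if_neg h0, Nat.factorization_eq_zero_of_not_dvd, pow_zero]
    exact fun hd => (Nat.not_even_iff_odd.2 h) (even_iff_two_dvd.2 hd)

theorem pow_eq_one_of_even {G : Type*} [Group G] {g : G} {k : ℕ} (hk : Even k) (h : g * g = 1) :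
    g ^ k = 1 := by
  obtain ⟨j, rfl⟩ := hk
  rw [← two_mul, pow_mul, pow_two, h, one_pow]

/-! ### Homomorphisms out of `W` and `W ⧸ N_b` -/

theorem mul_self_of_isCoxeterSystemOn {m : W → W → ℕ} {S : Set W}
    (hcs : IsCoxeterSystemOn m S) {s : W} (hs : s ∈ S) : s * s = 1 := by
  obtain ⟨cm, cs, h, -⟩ := hcs
  have := cs.simple_mul_simple_self ⟨s, hs⟩
  rwa [h] at this

theorem pow_of_isCoxeterSystemOn {m : W → W → ℕ} {S : Set W}
    (hcs : IsCoxeterSystemOn m S) {s t : W} (hs : s ∈ S) (ht : t ∈ S) : (s * t) ^ m s t = 1 := by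
  obtain ⟨cm, cs, h, hm⟩ := hcs
  have := cs.simple_mul_simple_pow ⟨s, hs⟩ ⟨t, ht⟩
  rwa [h, h, hm] at this

theorem exists_hom {m : W → W → ℕ} {S : Set W} (hcs : IsCoxeterSystemOn m S)
    {G : Type*} [Group G] (f : W → G)
    (hf : ∀ s ∈ S, ∀ t ∈ S, (f s * f t) ^ twoPart (m s t) = 1) :
    ∃ φ : W →* G, ∀ s ∈ S, φ s = f s := by
  obtain ⟨cm, cs, h, hm⟩ := hcs
  have hl : cm.IsLiftable (fun s : S => f s) := by
    intro s t
    obtain ⟨c, hc⟩ := twoPart_dvd (m s t)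
    rw [hm, hc, pow_mul, hf s s.2 t t.2, one_pow]
  refine ⟨cs.lift ⟨_, hl⟩, fun s hs => ?_⟩
  have := cs.lift_apply_simple hl ⟨s, hs⟩
  rwa [h] at this

/-- The universal property of `W ⧸ N_b`. Only the values of `f` on `S` matter. -/
theorem exists_quotient_hom {m : W → W → ℕ} {S : Set W} (hcs : IsCoxeterSystemOn m S)
    {G : Type*} [Group G] (f : W → G)
    (hf : ∀ s ∈ S, ∀ t ∈ S, (f s * f t) ^ twoPart (m s t) = 1) :
    ∃ φ : W ⧸ NbSubgroup m S →* G,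
      ∀ s ∈ S, φ (QuotientGroup.mk' (NbSubgroup m S) s) = f s := by
  obtain ⟨φ, hφ⟩ := exists_hom hcs f hf
  have hker : NbSubgroup m S ≤ φ.ker := by
    refine Subgroup.normalClosure_le_normal ?_
    rintro x ⟨s, hs, t, ht, -, rfl⟩
    simp only [SetLike.mem_coe, MonoidHom.mem_ker, map_pow, map_mul, hφ s hs, hφ t ht, hf s hs t ht]
  exact ⟨QuotientGroup.lift _ φ hker, fun s hs => by simpa using hφ s hs⟩

theorem quotient_pow_twoPart (m : W → W → ℕ) {S : Set W} {s t : W} (hs : s ∈ S) (ht : t ∈ S) :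
    (QuotientGroup.mk' (NbSubgroup m S) s * QuotientGroup.mk' (NbSubgroup m S) t)
      ^ twoPart (m s t) = 1 := by
  by_cases h : m s t = 0
  · simp [twoPart, h]
  · rw [← map_mul, ← map_pow, QuotientGroup.mk'_apply, QuotientGroup.eq_one_iff]
    exact Subgroup.subset_normalClosure ⟨s, hs, t, ht, h, rfl⟩

theorem quotient_mul_self {m : W → W → ℕ} {S : Set W} (hcs : IsCoxeterSystemOn m S)
    {s : W} (hs : s ∈ S) :
    QuotientGroup.mk' (NbSubgroup m S) s * QuotientGroup.mk' (NbSubgroup m S) s = 1 := by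
  rw [← map_mul, mul_self_of_isCoxeterSystemOn hcs hs, map_one]

/-! ### Generators joined by an odd label -/

/-- With `m(s,t) = 2k + 1`, the element `(s * t) ^ (-k)` conjugates `t` to `s`. -/
theorem isConj_of_odd {m : W → W → ℕ} {S : Set W} (hcs : IsCoxeterSystemOn m S)
    {s t : W} (hs : s ∈ S) (ht : t ∈ S) (h : Odd (m s t)) : IsConj s t := by
  have hpow := pow_of_isCoxeterSystemOn hcs hs ht
  have hss := mul_self_of_isCoxeterSystemOn hcs hs
  have htt := mul_self_of_isCoxeterSystemOn hcs ht
  obtain ⟨k, hk⟩ := h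
  -- `t` inverts `s * t`
  have hinv : SemiconjBy t (s * t) (s * t)⁻¹ := by
    rw [SemiconjBy, mul_inv_rev, inv_eq_of_mul_eq_one_left hss, inv_eq_of_mul_eq_one_left htt]
    simp only [mul_assoc]
  have hk' : t * (s * t) ^ k = ((s * t) ^ k)⁻¹ * t := by
    rw [← inv_pow]
    exact (hinv.pow_right k).eq
  have h1 : s * t = ((s * t) ^ k)⁻¹ * ((s * t) ^ k)⁻¹ := by
    rw [← mul_inv_rev, eq_inv_iff_mul_eq_one, ← pow_add, ← pow_succ', ← two_mul]
    exact hk ▸ hpow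
  refine (isConj_iff.2 ⟨((s * t) ^ k)⁻¹, ?_⟩ : IsConj t s).symm
  rw [inv_inv, mul_assoc, hk', ← mul_assoc, ← h1, mul_assoc, htt, mul_one]

theorem quotient_eq_of_odd {m : W → W → ℕ} {S : Set W} (hcs : IsCoxeterSystemOn m S)
    {s t : W} (hs : s ∈ S) (ht : t ∈ S) (h : twoPart (m s t) = 1) :
    QuotientGroup.mk' (NbSubgroup m S) s = QuotientGroup.mk' (NbSubgroup m S) t := by
  have h1 := quotient_pow_twoPart m hs ht
  rw [h, pow_one] at h1
  exact mul_right_cancel (h1.trans (quotient_mul_self hcs ht).symm)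

/-! ### The quotient as a Coxeter group -/

/-- In any Coxeter system the quotient by `N_b` is the Coxeter group of its own order function. -/
theorem isCoxeterSystemOn_orderOf {m : W → W → ℕ} {S : Set W} (hcs : IsCoxeterSystemOn m S) :
    IsCoxeterSystemOn (fun x y : W ⧸ NbSubgroup m S => orderOf (x * y))
      (QuotientGroup.mk' (NbSubgroup m S) '' S) := by
  set η := QuotientGroup.mk' (NbSubgroup m S) with hη
  have hsq : ∀ x : η '' S, (x : W ⧸ NbSubgroup m S) * x = 1 := by
    rintro ⟨_, s, hs, rfl⟩
    exact quotient_mul_self hcs hs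
  let cm : CoxeterMatrix (η '' S) :=
    { M := fun x y => orderOf ((x : W ⧸ NbSubgroup m S) * y)
      isSymm := by
        ext x y
        have : ((x : W ⧸ NbSubgroup m S) * y)⁻¹ = y * x := by
          rw [mul_inv_rev, inv_eq_of_mul_eq_one_left (hsq x), inv_eq_of_mul_eq_one_left (hsq y)]
        exact (congrArg orderOf this).symm.trans (orderOf_inv _)
      diagonal := fun x => by simp [hsq x]
      off_diagonal := fun x y hxy h => by
        rw [orderOf_eq_one_iff] at h
        exact hxy (Subtype.ext (mul_right_cancel (h.trans (hsq y).symm))) }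
  classical
  obtain ⟨φ, hφ⟩ := exists_quotient_hom hcs
    (fun s => if hs : s ∈ S then cm.simple ⟨η s, s, hs, rfl⟩ else 1) (by
      intro s hs t ht
      rw [dif_pos hs, dif_pos ht]
      obtain ⟨c, hc⟩ := orderOf_dvd_of_pow_eq_one (quotient_pow_twoPart m hs ht)
      rw [hc, pow_mul]
      have := cm.toCoxeterSystem.simple_mul_simple_pow ⟨η s, s, hs, rfl⟩ ⟨η t, t, ht, rfl⟩
      rw [cm.toCoxeterSystem_simple] at this
      exact (congrArg (· ^ c) this).trans (one_pow c))
  let ψ : cm.Group →* W ⧸ NbSubgroup m S :=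
    cm.toCoxeterSystem.lift ⟨fun x => (x : W ⧸ NbSubgroup m S), fun x y => pow_orderOf_eq_one _⟩
  have hψ : ∀ x : η '' S, ψ (cm.simple x) = x := fun x => by
    have := cm.toCoxeterSystem.lift_apply_simple
      (f := fun x : η '' S => (x : W ⧸ NbSubgroup m S)) (fun x y => pow_orderOf_eq_one _) x
    rwa [cm.toCoxeterSystem_simple] at this
  have hφ' : ∀ x : η '' S, φ x = cm.simple x := by
    rintro ⟨_, s, hs, rfl⟩
    exact (hφ s hs).trans (dif_pos hs)
  have h1 : ψ.comp φ = MonoidHom.id _ := by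
    refine QuotientGroup.monoidHom_ext _ ?_
    obtain ⟨cm₀, cs, h, -⟩ := hcs
    refine cs.ext_simple fun s => ?_
    rw [h]
    exact (congrArg ψ (hφ' ⟨η s, s, s.2, rfl⟩)).trans (hψ ⟨η s, s, s.2, rfl⟩)
  have h2 : φ.comp ψ = MonoidHom.id _ := by
    refine cm.toCoxeterSystem.ext_simple fun x => ?_
    rw [cm.toCoxeterSystem_simple, MonoidHom.comp_apply, hψ, hφ', MonoidHom.id_apply]
  exact ⟨cm, ⟨MonoidHom.toMulEquiv φ ψ h1 h2⟩, hψ, fun _ _ => rfl⟩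

/-! ### Conjugacy of generators -/

/-- A subset `P` of `S` that does not separate generators with `m(u,v)` odd has an indicator
function satisfying the relations of `W ⧸ N_b`, with values in a group of order two. -/
theorem indicator_relation {α : Type*} {m : α → α → ℕ} {S : Set α} (P : α → Prop) [DecidablePred P]
    (hP : ∀ u ∈ S, ∀ v ∈ S, Odd (m u v) → twoPart (m u v) = 1 → (P u ↔ P v)) :
    ∀ u ∈ S, ∀ v ∈ S, ((if P u then Multiplicative.ofAdd (1 : ZMod 2) else 1) *
      (if P v then Multiplicative.ofAdd (1 : ZMod 2) else 1)) ^ twoPart (m u v) = 1 := by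
  intro u hu v hv
  have hsq : ∀ g : Multiplicative (ZMod 2), g * g = 1 := by decide
  rcases odd_or_even_twoPart (m u v) with ⟨h, h1⟩ | h
  · simp only [hP u hu v hv h h1, hsq, one_pow]
  · exact pow_eq_one_of_even h (hsq _)

theorem quotient_eq_iff_isConj {m : W → W → ℕ} {S : Set W} (hcs : IsCoxeterSystemOn m S)
    {s t : W} (hs : s ∈ S) (ht : t ∈ S) :
    QuotientGroup.mk' (NbSubgroup m S) s = QuotientGroup.mk' (NbSubgroup m S) t ↔
      IsConj s t := by
  classical
  have hne : Multiplicative.ofAdd (1 : ZMod 2) ≠ 1 := by decide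
  constructor
  · intro h
    obtain ⟨φ, hφ⟩ := exists_quotient_hom hcs _ (indicator_relation (fun u => IsConj s u)
      fun u hu v hv ho _ => ⟨fun h => h.trans (isConj_of_odd hcs hu hv ho),
        fun h => h.trans (isConj_of_odd hcs hu hv ho).symm⟩)
    by_contra hn
    have h' := (hφ s hs).symm.trans ((congrArg φ h).trans (hφ t ht))
    rw [if_pos (IsConj.refl s), if_neg hn] at h'
    exact hne h'
  · intro h
    obtain ⟨φ, hφ⟩ := exists_hom hcs _ (indicator_relation
      (fun u => QuotientGroup.mk' (NbSubgroup m S) s = QuotientGroup.mk' (NbSubgroup m S) u)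
      fun u hu v hv _ h1 => by rw [quotient_eq_of_odd hcs hu hv h1])
    by_contra hn
    have h' := (hφ s hs).symm.trans
      ((isConj_iff_eq.1 (φ.map_isConj h)).trans (hφ t ht))
    rw [if_pos rfl, if_neg hn] at h'
    exact hne h'

/-! ### The order of a product of two generators -/

/-- In the quotient of `(W,S)` by `N_b`: the images of `S` form a Coxeter
system; two generators have the same image iff they are conjugate; and for nonconjugate
`s, t ∈ S` the order of `η s * η t` is the minimum of the `b(u,v)` over conjugates `u` of `s`
and `v` of `t` (the minimum taken in `ℕ ∪ {∞}`, with `0` encoding `∞`: it is the least nonzero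
such value, and `∞ = 0` if there is none), a power of `2` or `∞`. -/
theorem binary_quotient (m : W → W → ℕ) (S : Set W)
    (hcs : IsCoxeterSystemOn m S) (hfin : S.Finite) :
    (∃ mb : W ⧸ NbSubgroup m S → W ⧸ NbSubgroup m S → ℕ,
        IsCoxeterSystemOn mb (QuotientGroup.mk' (NbSubgroup m S) '' S)) ∧
    (∀ s ∈ S, ∀ t ∈ S,
        (QuotientGroup.mk' (NbSubgroup m S) s = QuotientGroup.mk' (NbSubgroup m S) t ↔
          IsConj s t)) ∧
    (∀ s ∈ S, ∀ t ∈ S, ¬ IsConj s t →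
        orderOf (QuotientGroup.mk' (NbSubgroup m S) s *
              QuotientGroup.mk' (NbSubgroup m S) t)
            = sInf {k | k ≠ 0 ∧
                ∃ u ∈ S, ∃ v ∈ S, IsConj u s ∧ IsConj v t ∧ twoPart (m u v) = k} ∧
          ((∃ j : ℕ, orderOf (QuotientGroup.mk' (NbSubgroup m S) s *
              QuotientGroup.mk' (NbSubgroup m S) t) = 2 ^ j) ∨
            orderOf (QuotientGroup.mk' (NbSubgroup m S) s *
              QuotientGroup.mk' (NbSubgroup m S) t) = 0)) := by
  refine ⟨⟨_, isCoxeterSystemOn_orderOf hcs⟩,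
    fun s hs t ht => quotient_eq_iff_isConj hcs hs ht, fun s hs t ht hst => ?_⟩
  classical
  set A : Set ℕ := {k | k ≠ 0 ∧
    ∃ u ∈ S, ∃ v ∈ S, IsConj u s ∧ IsConj v t ∧ twoPart (m u v) = k} with hA
  have hpow : ∀ k ∈ A, ∃ j : ℕ, k = 2 ^ j := by
    rintro k ⟨hk, u, -, v, -, -, -, rfl⟩
    exact exists_twoPart_eq_pow ((twoPart_ne_zero_iff _).1 hk)
  have hdvd : ∀ k ∈ A, sInf A ∣ k := by
    intro k hk
    obtain ⟨i, hi⟩ := hpow _ (Nat.sInf_mem ⟨k, hk⟩)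
    obtain ⟨j, rfl⟩ := hpow k hk
    have hle := Nat.sInf_le hk
    rw [hi] at hle ⊢
    exact pow_dvd_pow 2 ((Nat.pow_le_pow_iff_right one_lt_two).1 hle)
  have hA0 : sInf A = 0 ∨ sInf A ∈ A := by
    rcases A.eq_empty_or_nonempty with h | h
    · left; rw [h, Nat.sInf_empty]
    · right; exact Nat.sInf_mem h
  have hle : orderOf (QuotientGroup.mk' (NbSubgroup m S) s *
      QuotientGroup.mk' (NbSubgroup m S) t) ∣ sInf A := by
    rcases hA0 with h | ⟨-, u, hu, v, hv, hus, hvt, huv⟩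
    · simp [h]
    · rw [← huv, ← (quotient_eq_iff_isConj hcs hu hs).2 hus,
        ← (quotient_eq_iff_isConj hcs hv ht).2 hvt]
      exact orderOf_dvd_of_pow_eq_one (quotient_pow_twoPart m hu hv)
  have hge : sInf A ∣ orderOf (QuotientGroup.mk' (NbSubgroup m S) s *
      QuotientGroup.mk' (NbSubgroup m S) t) := by
    let f : W → DihedralGroup (sInf A) := fun u =>
      if IsConj u s then .sr 0 else if IsConj u t then .sr 1 else 1
    have hf2 : ∀ u, f u * f u = 1 := by
      intro u
      simp only [f]
      split_ifs <;> simp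
    have hff : ∀ u v, IsConj u v → f u = f v := by
      intro u v h
      have e : ∀ x, IsConj u x ↔ IsConj v x := fun x => ⟨h.symm.trans, h.trans⟩
      simp only [f, e]
    have hrot : ∀ u ∈ S, ∀ v ∈ S, IsConj u s → IsConj v t →
        sInf A ∣ twoPart (m u v) := by
      intro u hu v hv hus hvt
      by_cases h0 : twoPart (m u v) = 0
      · simp [h0]
      · exact hdvd _ ⟨h0, u, hu, v, hv, hus, hvt, rfl⟩
    have hsymm : ∀ u ∈ S, ∀ v ∈ S, m u v = m v u := by
      obtain ⟨cm, cs, -, hm⟩ := hcs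
      intro u hu v hv
      rw [← hm ⟨u, hu⟩ ⟨v, hv⟩, ← hm ⟨v, hv⟩ ⟨u, hu⟩, cm.symmetric]
    have hrel : ∀ u ∈ S, ∀ v ∈ S, (f u * f v) ^ twoPart (m u v) = 1 := by
      intro u hu v hv
      rcases odd_or_even_twoPart (m u v) with ⟨h, -⟩ | h
      · rw [hff u v (isConj_of_odd hcs hu hv h), hf2, one_pow]
      · by_cases hus : IsConj u s
        · by_cases hvs : IsConj v s
          · rw [hff u v (hus.trans hvs.symm), hf2, one_pow]
          · by_cases hvt : IsConj v t
            · obtain ⟨c, hc⟩ := hrot u hu v hv hus hvt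
              simp only [f, if_pos hus, if_neg hvs, if_pos hvt, DihedralGroup.sr_mul_sr, sub_zero]
              rw [hc, pow_mul, DihedralGroup.r_one_pow_n, one_pow]
            · have : f v = 1 := by simp only [f, if_neg hvs, if_neg hvt]
              rw [this, mul_one]
              exact pow_eq_one_of_even h (hf2 u)
        · by_cases hut : IsConj u t
          · by_cases hvs : IsConj v s
            · obtain ⟨c, hc⟩ := hrot v hv u hu hvs hut
              have hinv : f u * f v = (DihedralGroup.r 1)⁻¹ := by
                simp only [f, if_neg hus, if_pos hut, if_pos hvs, DihedralGroup.sr_mul_sr,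
                  DihedralGroup.inv_r, zero_sub]
              rw [hinv, hsymm u hu v hv, hc, pow_mul, inv_pow, DihedralGroup.r_one_pow_n,
                inv_one, one_pow]
            · by_cases hvt : IsConj v t
              · rw [hff u v (hut.trans hvt.symm), hf2, one_pow]
              · have : f v = 1 := by simp only [f, if_neg hvs, if_neg hvt]
                rw [this, mul_one]
                exact pow_eq_one_of_even h (hf2 u)
          · have : f u = 1 := by simp only [f, if_neg hus, if_neg hut]
            rw [this, one_mul]
            exact pow_eq_one_of_even h (hf2 v)
    obtain ⟨φ, hφ⟩ := exists_quotient_hom hcs f hrel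
    have hst' : ¬ IsConj t s := fun h => hst h.symm
    have himg : φ (QuotientGroup.mk' (NbSubgroup m S) s *
        QuotientGroup.mk' (NbSubgroup m S) t) = DihedralGroup.r 1 := by
      rw [map_mul, hφ s hs, hφ t ht]
      simp only [f, if_neg hst', if_pos (IsConj.refl _), DihedralGroup.sr_mul_sr, sub_zero]
    have := orderOf_map_dvd φ (QuotientGroup.mk' (NbSubgroup m S) s *
      QuotientGroup.mk' (NbSubgroup m S) t)
    rwa [himg, DihedralGroup.orderOf_r_one] at this
  have heq := Nat.dvd_antisymm hle hge
  refine ⟨heq, ?_⟩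
  rw [heq]
  exact hA0.symm.imp (hpow _) id
end

section
/- Let (W,S) be a Coxeter system of finite rank. Then N_b equals the normal closure in W of the set of all elements of W of odd order. Consequently N_b is a characteristic subgroup of W that does not depend on the choice of Coxeter generators S: in particular, every automorphism of W maps N_b onto N_b. -/
/-! Modulo `N_b` the group `W` becomes a group generated by involutions in which every relation
`(xy)^q = 1` has `q` a power of two: generators `s, t` with `m s t` odd are identified, and the
remaining finite labels are replaced by their 2-parts, which are even. Since `(st)^b` visibly has
odd order, the point is that such an even group (`EvenGroup` below) has no nontrivial element of
odd order.

This is proved without Tits' theorem on finite subgroups, by induction on a bound `d` for the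
exponents of the labels `2 ^ (k + 1)`, `k < d`. If there are no labels at all (`d = 0`), the group
is a free product of copies of `ℤ/2` and embeds in `FreeGroup X ⋊ ℤ/2`, with `ℤ/2` inverting the
generators (`noOdd_of_no_relations`). For the step, remove one generator `s`. As all labels
are even, the group is `K ⋊ G`, where `G` is the even group on the other generators and `K`, the
kernel of the retraction killing `s`, is generated by the conjugates `w s w⁻¹`. These are indexed
by the cosets `w C`, with `C` generated by the `t` with label `(s, t)` equal to `2`, and a label
`2 ^ (k + 2)` of `(s, t)` becomes the label `2 ^ (k + 1)` of the pair `w C, w t C`. So `K` is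
again an even group with a smaller bound on its labels, although of possibly infinite rank, while
`G` has smaller rank. Infinite rank is reduced to finite rank by retracting onto a finite set
of generators (`noOdd_of_finite`).

Invariance under automorphisms is then clear, as the set of elements of odd order is invariant. -/

variable {W : Type*} [Group W]

/-! ### Groups without elements of odd order -/

/-- The group `G` has no nontrivial element of odd order. -/
def NoOdd (G : Type*) [Group G] : Prop := ∀ (g : G) (n : ℕ), Odd n → g ^ n = 1 → g = 1

lemma NoOdd.of_injective {G H : Type*} [Group G] [Group H] (hH : NoOdd H) (f : G →* H)
    (hf : Function.Injective f) : NoOdd G := fun g n hn hg =>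
  hf (by rw [map_one]; exact hH _ n hn (by rw [← map_pow, hg, map_one]))

lemma NoOdd.of_leftInverse {G H : Type*} [Group G] [Group H] (hH : NoOdd H) (f : G →* H)
    (r : H →* G) (h : r.comp f = MonoidHom.id G) : NoOdd G :=
  hH.of_injective f (Function.LeftInverse.injective (g := r) fun x => DFunLike.congr_fun h x)

lemma NoOdd.semidirect {N G : Type*} [Group N] [Group G] (φ : G →* MulAut N)
    (hN : NoOdd N) (hG : NoOdd G) : NoOdd (N ⋊[φ] G) := by
  intro g n hn hg
  have hr : g.right = 1 := hG _ n hn (by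
    have := congrArg SemidirectProduct.rightHom hg
    rwa [map_pow, map_one] at this)
  have hgl : g = SemidirectProduct.inl g.left := by
    ext <;> simp [hr]
  rw [hgl, ← map_pow, ← map_one (SemidirectProduct.inl (φ := φ)),
    SemidirectProduct.inl_inj] at hg
  rw [hgl, hN _ n hn hg, map_one]

/-! ### Groups presented by involutions and even 2-power labels -/

/-- The relators `x * x` and `(x * y) ^ (2 ^ (k + 1))` for `R k x y`. -/
def evenRels {X : Type*} (R : ℕ → X → X → Prop) : Set (FreeGroup X) :=
  {r | ∃ x, r = FreeGroup.of x * FreeGroup.of x} ∪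
  {r | ∃ k x y, R k x y ∧ r = (FreeGroup.of x * FreeGroup.of y) ^ (2 ^ (k + 1))}

/-- The group generated by involutions `x : X` subject to `(x * y) ^ (2 ^ (k + 1)) = 1` whenever
`R k x y`. Exponent `1` is excluded, so that killing any set of generators respects the relations.
The relation `R k` is not required to be symmetric, and a pair may carry several labels. -/
abbrev EvenGroup {X : Type*} (R : ℕ → X → X → Prop) := PresentedGroup (evenRels R)

namespace EvenGroup

variable {X : Type*} {R : ℕ → X → X → Prop}

/-- The generator of `EvenGroup R` indexed by `x`. -/
def gen (R : ℕ → X → X → Prop) (x : X) : EvenGroup R := PresentedGroup.of x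

@[simp]
lemma gen_mul_self (x : X) : gen R x * gen R x = 1 :=
  PresentedGroup.one_of_mem (rels := evenRels R) (Or.inl ⟨x, rfl⟩)

lemma gen_rel {k : ℕ} {x y : X} (h : R k x y) : (gen R x * gen R y) ^ (2 ^ (k + 1)) = 1 :=
  PresentedGroup.one_of_mem (rels := evenRels R) (Or.inr ⟨k, x, y, h, rfl⟩)

lemma gen_inv (x : X) : (gen R x)⁻¹ = gen R x :=
  inv_eq_of_mul_eq_one_right (gen_mul_self x)

/-- In any group, `a b` and `b a` satisfy the same power relations when `a, b` are involutions. -/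
lemma pow_swap {H : Type*} [Group H] {a b : H} (ha : a * a = 1) (hb : b * b = 1) {n : ℕ}
    (h : (a * b) ^ n = 1) : (b * a) ^ n = 1 := by
  have : b * a = (a * b)⁻¹ := by
    rw [mul_inv_rev, inv_eq_of_mul_eq_one_right ha, inv_eq_of_mul_eq_one_right hb]
  rw [this, inv_pow, h, inv_one]

/-- The universal property of `EvenGroup R`. -/
def lift {H : Type*} [Group H] (f : X → H) (h1 : ∀ x, f x * f x = 1)
    (h2 : ∀ k x y, R k x y → (f x * f y) ^ (2 ^ (k + 1)) = 1) : EvenGroup R →* H :=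
  PresentedGroup.toGroup (f := f) (by
    rintro r (⟨x, rfl⟩ | ⟨k, x, y, h, rfl⟩)
    · simpa using h1 x
    · simpa using h2 k x y h)

@[simp]
lemma lift_gen {H : Type*} [Group H] (f : X → H) (h1 : ∀ x, f x * f x = 1)
    (h2 : ∀ k x y, R k x y → (f x * f y) ^ (2 ^ (k + 1)) = 1) (x : X) :
    lift f h1 h2 (gen R x) = f x :=
  PresentedGroup.toGroup.of _

lemma hom_ext {H : Type*} [Group H] {f g : EvenGroup R →* H}
    (h : ∀ x, f (gen R x) = g (gen R x)) : f = g :=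
  PresentedGroup.ext h

lemma gen_induction {P : EvenGroup R → Prop} (g : EvenGroup R) (h1 : P 1)
    (hm : ∀ a b, P a → P b → P (a * b)) (hg : ∀ x, P (gen R x)) : P g := by
  induction g using PresentedGroup.induction_on with
  | H z =>
    induction z using FreeGroup.induction_on with
    | C1 => simpa using h1
    | of x => exact hg x
    | inv_of x _ =>
      have : P (gen R x)⁻¹ := by rw [gen_inv]; exact hg x
      exact this
    | mul a b ha hb => rw [map_mul]; exact hm _ _ ha hb

/-! ### Labels all infinite -/

/-- The automorphism of the free group inverting every generator. -/
def invGens (X : Type*) : MulAut (FreeGroup X) :=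
  MonoidHom.toMulEquiv (FreeGroup.lift fun x => (FreeGroup.of x)⁻¹)
    (FreeGroup.lift fun x => (FreeGroup.of x)⁻¹) (by ext; simp) (by ext; simp)

@[simp]
lemma invGens_of (x : X) : invGens X (FreeGroup.of x) = (FreeGroup.of x)⁻¹ := by
  simp [invGens]

lemma invGens_mul_self : invGens X * invGens X = 1 := by
  apply MulEquiv.toMonoidHom_injective
  ext x
  simp

lemma mem_zpowers_invGens {a : MulAut (FreeGroup X)} (ha : a ∈ Subgroup.zpowers (invGens X)) :
    a = 1 ∨ a = invGens X := by
  obtain ⟨k, rfl⟩ := ha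
  obtain ⟨l, rfl | rfl⟩ := Int.even_or_odd' k
  · left; simp [zpow_mul, pow_two, invGens_mul_self]
  · right; simp [zpow_add, zpow_mul, pow_two, invGens_mul_self]

/-- A free product of copies of `ℤ/2` has no element of odd order: it is a retract of
`FreeGroup X ⋊ ⟨τ⟩`, where `τ` inverts the generators, via `x ↦ (x, τ)`. The retraction sends
`x` to `x` and kills `τ`. -/
lemma noOdd_of_no_relations (hR : ∀ k x y, ¬ R k x y) : NoOdd (EvenGroup R) := by
  let A := Subgroup.zpowers (invGens X)
  let τ : A := ⟨invGens X, Subgroup.mem_zpowers _⟩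
  let f : EvenGroup R →* FreeGroup X ⋊[A.subtype] A :=
    lift (fun x => ⟨FreeGroup.of x, τ⟩)
      (fun x => by
        ext
        · simp [τ]
        · simpa using congrArg (fun a : MulAut (FreeGroup X) => a _) invGens_mul_self)
      (fun k x y h => (hR k x y h).elim)
  let p : FreeGroup X →* EvenGroup R := FreeGroup.lift (gen R)
  let r : FreeGroup X ⋊[A.subtype] A →* EvenGroup R :=
    SemidirectProduct.lift p 1 (by
      rintro ⟨a, ha⟩
      rcases mem_zpowers_invGens ha with rfl | rfl
      · ext; simp
      · ext x; simp [p, gen_inv])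
  refine NoOdd.of_leftInverse (NoOdd.semidirect _ ?_ ?_) f r (hom_ext fun x => ?_)
  · intro g n hn hg
    exact (pow_eq_one_iff_left hn.pos.ne').1 hg
  · rintro ⟨a, ha⟩ n ⟨l, rfl⟩ h
    have h2 : (⟨a, ha⟩ : A) ^ 2 = 1 := by
      ext1
      rcases mem_zpowers_invGens ha with rfl | rfl
      · simp
      · simpa [pow_two] using invGens_mul_self
    simpa [pow_add, pow_mul, h2] using h
  · simp [f, r, p, SemidirectProduct.lift]

/-! ### Reduction to finite rank -/

/-- The inclusion of the group on a subset of the generators. -/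
def incl (R : ℕ → X → X → Prop) (F : Finset X) :
    EvenGroup (fun k (x y : F) => R k x y) →* EvenGroup R :=
  lift (fun x => gen R x) (fun _ => gen_mul_self _) (fun _ _ _ h => gen_rel h)

open scoped Classical in
/-- The retraction killing the generators outside `F`. -/
noncomputable def retr (R : ℕ → X → X → Prop) (F : Finset X) :
    EvenGroup R →* EvenGroup (fun k (x y : F) => R k x y) :=
  lift (fun x => if h : x ∈ F then gen _ ⟨x, h⟩ else 1)
    (fun _ => by split_ifs <;> simp)
    (fun k x y h => by
      split_ifs with hx hy hy
      · exact gen_rel (R := fun k (x y : F) => R k x y) h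
      all_goals simp [pow_succ', pow_mul])

lemma exists_incl_retr (g : EvenGroup R) :
    ∃ F : Finset X, ∀ F', F ⊆ F' → incl R F' (retr R F' g) = g := by
  classical
  induction g using gen_induction with
  | h1 => exact ⟨∅, by simp⟩
  | hm a b ha hb =>
    obtain ⟨F, hF⟩ := ha
    obtain ⟨E, hE⟩ := hb
    refine ⟨F ∪ E, fun F' h => ?_⟩
    rw [map_mul, map_mul, hF _ (Finset.union_subset_left h), hE _ (Finset.union_subset_right h)]
  | hg x =>
    refine ⟨{x}, fun F' h => ?_⟩
    have hx : x ∈ F' := h (Finset.mem_singleton_self x)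
    simp [retr, incl, hx]

lemma noOdd_of_finite
    (h : ∀ F : Finset X, NoOdd (EvenGroup (fun k (x y : F) => R k x y))) :
    NoOdd (EvenGroup R) := by
  intro g n hn hg
  obtain ⟨F, hF⟩ := exists_incl_retr g
  rw [← hF F subset_rfl, h F (retr R F g) n hn (by rw [← map_pow, hg, map_one]), map_one]

/-! ### Splitting off one generator -/

section Split

variable (R : ℕ → Option X → Option X → Prop)

/-- The relations among the generators other than `none`. -/
def restr : ℕ → X → X → Prop := fun k x y => R k (some x) (some y)

/-- The label `2 ^ (k + 1)` is present between `none` and `some t`, in either order. -/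
def Lbl (k : ℕ) (t : X) : Prop := R k none (some t) ∨ R k (some t) none

/-- The subgroup generated by the generators with label `2` to `none`, which all commute with
`none`. -/
def cent : Subgroup (EvenGroup (restr R)) :=
  Subgroup.closure {c | ∃ t, Lbl R 0 t ∧ c = gen (restr R) t}

/-- The relations between the conjugates `w s w⁻¹` of `s = none`, indexed by cosets of `cent R`. -/
def kerRel : ℕ → (EvenGroup (restr R) ⧸ cent R) → (EvenGroup (restr R) ⧸ cent R) → Prop :=
  fun k a b => ∃ (w : EvenGroup (restr R)) (t : X), Lbl R (k + 1) t ∧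
    a = (w : EvenGroup (restr R) ⧸ cent R) ∧ b = ((w * gen (restr R) t : EvenGroup (restr R)) :
      EvenGroup (restr R) ⧸ cent R)

/-- Translation of the indexing cosets, as an endomorphism of the group on the conjugates. -/
def trans (w : EvenGroup (restr R)) : EvenGroup (kerRel R) →* EvenGroup (kerRel R) :=
  lift (fun a => gen (kerRel R) (w • a)) (fun a => gen_mul_self _) (by
    rintro k _ _ ⟨v, t, h, rfl, rfl⟩
    exact gen_rel ⟨w * v, t, h, rfl, by rw [mul_assoc]; rfl⟩)

/-- The action of the group on the remaining generators on the group on the conjugates. -/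
def act : EvenGroup (restr R) →* MulAut (EvenGroup (kerRel R)) where
  toFun w := MonoidHom.toMulEquiv (trans R w) (trans R w⁻¹)
    (hom_ext fun x => by simp [trans]) (hom_ext fun x => by simp [trans])
  map_one' := by
    apply MulEquiv.toMonoidHom_injective
    exact hom_ext fun x => by simp [trans]
  map_mul' a b := by
    apply MulEquiv.toMonoidHom_injective
    exact hom_ext fun x => by simp [trans, mul_smul]

@[simp]
lemma act_gen (w : EvenGroup (restr R)) (a) :
    act R w (gen (kerRel R) a) = gen (kerRel R) (w • a) := by
  simp [act, trans]

/-- In `K ⋊ G`, the generator `x₁` of `K` indexed by the trivial coset and `t` in `G` satisfy the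
relation of `none` and `some t`: the square of `x₁ t` is the product of `x₁` and its translate by
`t`, which is `1` for label `2` and is subject to the halved label otherwise. -/
lemma split_rel {k : ℕ} {t : X} (h : Lbl R k t) :
    ((SemidirectProduct.inl (gen (kerRel R) ((1 : EvenGroup (restr R)) :
        EvenGroup (restr R) ⧸ cent R)) : EvenGroup (kerRel R) ⋊[act R] EvenGroup (restr R)) *
      SemidirectProduct.inr (gen (restr R) t)) ^ (2 ^ (k + 1)) = 1 := by
  set e : EvenGroup (restr R) ⧸ cent R := QuotientGroup.mk (1 : EvenGroup (restr R)) with he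
  have h2 : ((SemidirectProduct.inl (gen (kerRel R) e) :
        EvenGroup (kerRel R) ⋊[act R] EvenGroup (restr R)) *
      SemidirectProduct.inr (gen (restr R) t)) ^ 2 =
      SemidirectProduct.inl (gen (kerRel R) e * gen (kerRel R) (gen (restr R) t • e)) := by
    rw [pow_two]
    ext <;> simp
  rw [pow_succ', pow_mul, h2, ← map_pow]
  cases k with
  | zero =>
    have : gen (restr R) t • e = e := by
      rw [he, MulAction.Quotient.smul_coe, QuotientGroup.eq, smul_eq_mul, mul_one, mul_one,
        inv_mem_iff]
      exact Subgroup.subset_closure ⟨t, h, rfl⟩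
    simp [this]
  | succ k =>
    rw [gen_rel ⟨1, t, h, he, by rw [he, MulAction.Quotient.smul_coe, smul_eq_mul, mul_one,
      one_mul]⟩, map_one]

/-- The map to `K ⋊ G`, sending `none` to the generator of `K` indexed by the trivial coset and
`some t` to `t`. -/
def split : EvenGroup R →* EvenGroup (kerRel R) ⋊[act R] EvenGroup (restr R) :=
  lift (fun x => x.elim
      (SemidirectProduct.inl (gen (kerRel R) ((1 : EvenGroup (restr R)) :
        EvenGroup (restr R) ⧸ cent R)))
      (fun t => SemidirectProduct.inr (gen (restr R) t)))
    (by
      rintro (_ | t)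
      · simp [← map_mul]
      · simp [← map_mul])
    (by
      rintro k (_ | x) (_ | y) h
      · simp [← map_mul]
      · exact split_rel R (Or.inl h)
      · refine pow_swap ?_ ?_ (split_rel R (Or.inr h))
        · simp [← map_mul]
        · simp [← map_mul]
      · simp only [Option.elim_some, ← map_mul, ← map_pow]
        rw [gen_rel (R := restr R) h, map_one])

/-- The inclusion of the group on the remaining generators. -/
def inclSome : EvenGroup (restr R) →* EvenGroup R :=
  lift (fun x => gen R (some x)) (fun _ => gen_mul_self _) (fun _ _ _ h => gen_rel h)

lemma lbl_rel {k : ℕ} {t : X} (h : Lbl R k t) :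
    (gen R none * gen R (some t)) ^ (2 ^ (k + 1)) = 1 := by
  rcases h with h | h
  · exact gen_rel h
  · exact pow_swap (gen_mul_self _) (gen_mul_self _) (gen_rel h)

lemma cent_comm {c : EvenGroup (restr R)} (hc : c ∈ cent R) :
    inclSome R c * gen R none = gen R none * inclSome R c := by
  induction hc using Subgroup.closure_induction with
  | mem c hc =>
    obtain ⟨t, ht, rfl⟩ := hc
    have h := lbl_rel R ht
    rw [zero_add, pow_one, pow_two] at h
    have h' := inv_eq_of_mul_eq_one_right h
    rw [mul_inv_rev, gen_inv, gen_inv] at h'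
    simpa [inclSome] using h'
  | one => simp
  | mul a b _ _ ha hb => rw [map_mul, mul_assoc, hb, ← mul_assoc, ha, mul_assoc]
  | inv a _ ha =>
    rw [map_inv]
    exact (Commute.inv_left (show Commute (inclSome R a) (gen R none) from ha))

/-- The conjugate `w s w⁻¹` of `s = none`, as a function of the coset of `w`. -/
def conjOf (a : EvenGroup (restr R) ⧸ cent R) : EvenGroup R :=
  Quotient.liftOn' a (fun w => inclSome R w * gen R none * (inclSome R w)⁻¹) (by
    intro v w h
    rw [QuotientGroup.leftRel_apply] at h
    obtain ⟨c, hc, rfl⟩ : ∃ c ∈ cent R, w = v * c := ⟨_, h, by simp⟩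
    rw [map_mul, mul_assoc (inclSome R v) (inclSome R c), cent_comm R hc]
    group)

@[simp]
lemma conjOf_mk (w : EvenGroup (restr R)) :
    conjOf R (w : EvenGroup (restr R) ⧸ cent R) =
      inclSome R w * gen R none * (inclSome R w)⁻¹ := rfl

/-- The map from the group on the conjugates of `none`. The relation of `w s w⁻¹` and
`w t s (w t)⁻¹` holds since their product is conjugate to `(s t) ^ 2`. -/
def kerIncl : EvenGroup (kerRel R) →* EvenGroup R :=
  lift (conjOf R)
    (by
      intro a
      induction a using QuotientGroup.induction_on with
      | H w =>
        rw [conjOf_mk, conj_mul, gen_mul_self, mul_one, mul_inv_cancel])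
    (by
      rintro k _ _ ⟨w, t, h, rfl, rfl⟩
      have : conjOf R (w : EvenGroup (restr R) ⧸ cent R) *
          conjOf R ((w * gen (restr R) t : EvenGroup (restr R)) : EvenGroup (restr R) ⧸ cent R) =
          inclSome R w * (gen R none * gen R (some t)) ^ 2 * (inclSome R w)⁻¹ := by
        rw [conjOf_mk, conjOf_mk, map_mul]
        simp [inclSome, gen_inv, pow_two, mul_assoc]
      rw [this, conj_pow, ← pow_mul, ← pow_succ', lbl_rel R h, mul_one, mul_inv_cancel])

/-- The map back from the semidirect product. -/
def unsplit : EvenGroup (kerRel R) ⋊[act R] EvenGroup (restr R) →* EvenGroup R :=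
  SemidirectProduct.lift (kerIncl R) (inclSome R) (by
    intro w
    refine hom_ext fun a => ?_
    induction a using QuotientGroup.induction_on with
    | H v =>
      simp [kerIncl, mul_assoc])

lemma unsplit_comp_split : (unsplit R).comp (split R) = MonoidHom.id _ := by
  refine hom_ext ?_
  rintro (_ | t) <;> simp [unsplit, split, kerIncl, inclSome]

end Split

/-! ### No odd torsion in even groups -/

universe u

lemma noOdd_of_bounded (d : ℕ) : ∀ (X : Type u) (R : ℕ → X → X → Prop),
    (∀ k x y, R k x y → k < d) → NoOdd (EvenGroup R) := by
  induction d with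
  | zero => exact fun X R h => noOdd_of_no_relations fun k x y hk => by simpa using h k x y hk
  | succ d ih =>
    have hfin : ∀ (X : Type u) [Finite X] (R : ℕ → X → X → Prop),
        (∀ k x y, R k x y → k < d + 1) → NoOdd (EvenGroup R) := by
      intro X _
      induction X using Finite.induction_empty_option with
      | of_equiv e h =>
        intro R hR
        refine NoOdd.of_leftInverse
          (h (fun k x y => R k (e x) (e y)) fun k x y hk => hR k _ _ hk)
          (lift (fun x => gen _ (e.symm x)) (fun _ => gen_mul_self _)
            (fun k x y hk => gen_rel (by simpa using hk)))
          (lift (fun x => gen R (e x)) (fun _ => gen_mul_self _) (fun k x y hk => gen_rel hk))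
          (hom_ext fun x => by simp)
      | h_empty =>
        intro R _
        exact noOdd_of_no_relations fun k x => x.elim
      | h_option h =>
        intro R hR
        refine NoOdd.of_leftInverse (NoOdd.semidirect _ (ih _ (kerRel R) ?_)
          (h (restr R) fun k x y hk => hR k _ _ hk)) (split R) (unsplit R) (unsplit_comp_split R)
        rintro k _ _ ⟨w, t, hk | hk, rfl, rfl⟩
        · exact Nat.lt_of_succ_lt_succ (hR _ _ _ hk)
        · exact Nat.lt_of_succ_lt_succ (hR _ _ _ hk)
    exact fun X R h => noOdd_of_finite fun F => hfin F _ fun k x y hk => h k _ _ hk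

end EvenGroup

/-! ### The quotient of a Coxeter group by `N_b` -/

lemma exists_odd_mul_twoPart {k : ℕ} (hk : k ≠ 0) : ∃ q, Odd q ∧ k = twoPart k * q := by
  refine ⟨k / 2 ^ k.factorization 2, ?_, ?_⟩
  · rw [← Nat.not_even_iff_odd, even_iff_two_dvd]
    exact Nat.not_dvd_ordCompl Nat.prime_two hk
  · rw [twoPart, if_neg hk, Nat.ordProj_mul_ordCompl_eq_self]

/-- The projection `W → W ⧸ N_b` factors through a group without odd torsion: the even group on
the classes of generators modulo the equivalence relation generated by odd labels. -/
lemma mem_NbSubgroup_of_odd (m : W → W → ℕ) (S : Set W) (hcs : IsCoxeterSystemOn m S)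
    (hfin : S.Finite) (w : W) (n : ℕ) (hn : Odd n) (hw : w ^ n = 1) : w ∈ NbSubgroup m S := by
  obtain ⟨cm, cs, hs, hm⟩ := hcs
  have : Finite S := hfin
  let E : Setoid S := Relation.EqvGen.setoid fun s t : S => Odd (m s t)
  let R : ℕ → Quotient E → Quotient E → Prop := fun k x y => ∃ s t : S,
    m s t ≠ 0 ∧ twoPart (m s t) = 2 ^ (k + 1) ∧ x = Quotient.mk E s ∧ y = Quotient.mk E t
  obtain ⟨d, hd⟩ : ∃ d, ∀ s t : S, m s t < d := by
    obtain ⟨d, hd⟩ := (Set.finite_range fun p : S × S => m p.1 p.2).bddAbove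
    exact ⟨d + 1, fun s t => Nat.lt_succ_of_le (hd ⟨(s, t), rfl⟩)⟩
  have hno : NoOdd (EvenGroup R) := by
    refine EvenGroup.noOdd_of_bounded d _ R ?_
    rintro k _ _ ⟨s, t, h0, h2, rfl, rfl⟩
    refine lt_trans ?_ (hd s t)
    obtain ⟨q, hq, h⟩ := exists_odd_mul_twoPart h0
    rw [h, h2]
    calc k < 2 ^ k := Nat.lt_two_pow_self
      _ ≤ 2 ^ (k + 1) := Nat.pow_le_pow_right (by norm_num) (Nat.le_succ k)
      _ ≤ 2 ^ (k + 1) * q := Nat.le_mul_of_pos_right _ hq.pos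
  have hlift : cm.IsLiftable fun s => EvenGroup.gen R (Quotient.mk E s) := by
    intro s t
    beta_reduce
    rw [hm]
    by_cases h0 : m s t = 0
    · rw [h0, pow_zero]
    obtain ⟨q, hq, h⟩ := exists_odd_mul_twoPart h0
    rcases hk : (m s t).factorization 2 with _ | k
    · -- an odd label identifies the two generators
      have hodd : Odd (m s t) := by
        rw [h, twoPart, if_neg h0, hk, pow_zero, one_mul]; exact hq
      have : Quotient.mk E s = Quotient.mk E t := Quotient.sound (Relation.EqvGen.rel _ _ hodd)
      rw [this, EvenGroup.gen_mul_self, one_pow]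
    · have hb : twoPart (m s t) = 2 ^ (k + 1) := by rw [twoPart, if_neg h0, hk]
      rw [h, hb, pow_mul, EvenGroup.gen_rel ⟨s, t, h0, hb, rfl, rfl⟩, one_pow]
  let f : W →* EvenGroup R := cs.lift ⟨_, hlift⟩
  let π := QuotientGroup.mk' (NbSubgroup m S)
  have hsq : ∀ s : S, (s : W) * s = 1 := fun s => by rw [← hs, cs.simple_mul_simple_self]
  have hπ : ∀ s t : S, m s t ≠ 0 → (π s * π t) ^ twoPart (m s t) = 1 := by
    intro s t h0
    rw [← map_mul, ← map_pow]
    exact (QuotientGroup.eq_one_iff _).2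
      (Subgroup.subset_normalClosure ⟨s, s.2, t, t.2, h0, rfl⟩)
  have hE : ∀ s t : S, E s t → π s = π t := by
    intro s t h
    induction h with
    | rel s t h =>
      have h0 : m s t ≠ 0 := h.pos.ne'
      have h1 := hπ s t h0
      rw [twoPart, if_neg h0, Nat.factorization_eq_zero_of_not_dvd
        (by rwa [← even_iff_two_dvd, Nat.not_even_iff_odd]), pow_zero, pow_one] at h1
      have h2 : π t * π t = 1 := by rw [← map_mul, hsq, map_one]
      exact mul_right_cancel (h1.trans h2.symm)
    | refl => rfl
    | symm _ _ _ ih => exact ih.symm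
    | trans _ _ _ _ _ ih1 ih2 => exact ih1.trans ih2
  let r : EvenGroup R →* W ⧸ NbSubgroup m S :=
    EvenGroup.lift (fun x => Quotient.liftOn x (fun s : S => π s) hE)
      (by
        intro x
        induction x using Quotient.inductionOn with
        | h s => simp only [Quotient.lift_mk, ← map_mul, hsq, map_one])
      (by
        rintro k _ _ ⟨s, t, h0, hb, rfl, rfl⟩
        rw [← hb]
        exact hπ s t h0)
  have hrf : r.comp f = π := by
    refine cs.ext_simple fun s => ?_
    rw [MonoidHom.comp_apply, CoxeterSystem.lift_apply_simple, hs, EvenGroup.lift_gen]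
    rfl
  have hfw : f w = 1 := hno _ n hn (by rw [← map_pow, hw, map_one])
  rw [← QuotientGroup.eq_one_iff]
  change π w = 1
  rw [← hrf, MonoidHom.comp_apply, hfw, map_one]

/-- `N_b` is the normal closure of the set of elements of odd order, and is
a characteristic subgroup of `W`. -/
theorem Nb_characteristic (m : W → W → ℕ) (S : Set W)
    (hcs : IsCoxeterSystemOn m S) (hfin : S.Finite) :
    NbSubgroup m S
        = Subgroup.normalClosure {w : W | 0 < orderOf w ∧ Odd (orderOf w)} ∧
      ∀ φ : W ≃* W, Subgroup.map φ.toMonoidHom (NbSubgroup m S) = NbSubgroup m S := by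
  have key : NbSubgroup m S
      = Subgroup.normalClosure {w : W | 0 < orderOf w ∧ Odd (orderOf w)} := by
    apply le_antisymm
    · refine Subgroup.normalClosure_mono ?_
      rintro _ ⟨s, hs, t, ht, h0, rfl⟩
      obtain ⟨cm, cs, hsimple, hm⟩ := hcs
      obtain ⟨q, hq, h⟩ := exists_odd_mul_twoPart h0
      have h1 : (s * t) ^ m s t = 1 := by
        have := cs.simple_mul_simple_pow ⟨s, hs⟩ ⟨t, ht⟩
        rwa [hsimple, hsimple, hm] at this
      have hdvd : orderOf ((s * t) ^ twoPart (m s t)) ∣ q :=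
        orderOf_dvd_of_pow_eq_one (by rw [← pow_mul, ← h, h1])
      have hodd := hq.of_dvd_nat hdvd
      exact ⟨hodd.pos, hodd⟩
    · refine Subgroup.normalClosure_le_normal ?_
      rintro w ⟨_, hw⟩
      exact mem_NbSubgroup_of_odd m S hcs hfin w _ hw (pow_orderOf_eq_one w)
  refine ⟨key, fun φ => ?_⟩
  rw [key, Subgroup.map_normalClosure _ _ φ.surjective]
  congr 1
  ext w
  constructor
  · rintro ⟨v, hv, rfl⟩
    rwa [Set.mem_ofPred_eq, MulEquiv.toMonoidHom_eq_coe, MonoidHom.coe_coe, φ.orderOf_eq]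
  · intro hw
    refine ⟨φ.symm w, ?_, by simp⟩
    rwa [Set.mem_ofPred_eq, φ.symm.orderOf_eq]
end

section
/- Let (W,S) be a Coxeter system of finite rank whose Coxeter matrix m has the property that for all distinct s,t ∈ S, either m(s,t) = ∞ or m(s,t) is a power of 2. Then W has no nontrivial elements of odd order: every element of W of finite odd order is the identity. -/
/-! The geometric representation of a Coxeter group is faithful, and when the finite labels are powers
of `2` it is trivial modulo an ideal above `2`, so elements of odd order must vanish.

In the basis of simple roots `α_t` the simple reflection `s` sends `α_t` to
`α_t + 2 cos (π / m(s,t)) α_s`. The entries lie in `R = ℤ[2 cos (π / m(s,t))] ⊂ ℝ`, a Noetherian ring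
of algebraic integers. Let `I` be the radical of `2R`. The recursion
`(2 cos (π / 2^(k+1)))² = 2 + 2 cos (π / 2^k)` puts every `2 cos (π / m(s,t))` in `I`, and
`m(s,t) = ∞` contributes the entry `2 ∈ I`. Hence all of `W` acts trivially on each quotient
`I^j R^S / I^(j+1) R^S` (`geomRep_sub_mem`). Moreover `I ≠ R` because `1/2` is not an algebraic
integer, so `⋂ I^j = 0` by Krull's intersection theorem (`exists_filtration`).

If `w^n = 1` and `g` is the image of `w`, with `n` odd, put `u = g α - α` for a simple root `α`; then
`∑_{i<n} g^i u = 0`. When the coordinates of `u` lie in `I^j`, this sum is congruent to `n u` modulo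
`I^(j+1)`; since `n` is odd and `2 ∈ I`, the coordinates of `u` lie in `I^(j+1)`. Therefore `u = 0`
and `g = 1` (`eq_one_of_odd_pow`).

Faithfulness is Tits's theorem: if `s` is not a right descent of `w`, then `w α_s` is a nonnegative
combination of simple roots (`geomRep_nonneg`). The induction on length splits off from `w` a maximal
alternating right factor in `s` and a right descent `t`; its action on `α_s` has coefficients
`sin (kπ/m) / sin (π/m) ≥ 0`. -/


variable {W : Type*} [Group W]

/-! ### Sine quotients -/

/-- The quotient `sin (kπ/m) / sin (π/m)`, and its limit `k` when `m = 0` (encoding `m = ∞`). -/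
noncomputable def sinQuot (m k : ℕ) : ℝ :=
  if m = 0 then k else Real.sin (k * (Real.pi / m)) / Real.sin (Real.pi / m)

theorem sin_pi_div_pos {m : ℕ} (h0 : m ≠ 0) (h1 : m ≠ 1) : 0 < Real.sin (Real.pi / m) := by
  have hm : (2 : ℝ) ≤ m := by exact_mod_cast (show 2 ≤ m by lia)
  apply Real.sin_pos_of_pos_of_lt_pi
  · have := Real.pi_pos
    positivity
  · rw [div_lt_iff₀ (by linarith)]
    nlinarith [Real.pi_pos]

theorem sinQuot_zero (m : ℕ) : sinQuot m 0 = 0 := by simp [sinQuot]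

theorem sinQuot_one {m : ℕ} (h1 : m ≠ 1) : sinQuot m 1 = 1 := by
  unfold sinQuot
  split_ifs with h
  · simp
  · have := sin_pi_div_pos h h1
    simp [this.ne']

theorem sinQuot_add_two (m k : ℕ) :
    sinQuot m (k + 2) = 2 * Real.cos (Real.pi / m) * sinQuot m (k + 1) - sinQuot m k := by
  unfold sinQuot
  split_ifs with h
  · subst h
    simp
    ring
  · set x := Real.pi / m
    have e2 : ((k + 2 : ℕ) : ℝ) * x = (k + 1) * x + x := by push_cast; ring
    have e1 : ((k + 1 : ℕ) : ℝ) * x = (k + 1) * x := by push_cast; ring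
    have e0 : (k : ℝ) * x = (k + 1) * x - x := by ring
    rw [e2, e1, e0, Real.sin_add, Real.sin_sub]
    ring

theorem sinQuot_nonneg {m k : ℕ} (h1 : m ≠ 1) (hk : m = 0 ∨ k ≤ m) : 0 ≤ sinQuot m k := by
  unfold sinQuot
  split_ifs with h
  · positivity
  · have hkm : (k : ℝ) ≤ m := by exact_mod_cast hk.resolve_left h
    have hm : (0 : ℝ) < m := by exact_mod_cast Nat.pos_of_ne_zero h
    have := Real.pi_pos
    refine div_nonneg (Real.sin_nonneg_of_nonneg_of_le_pi (by positivity) ?_)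
      (sin_pi_div_pos h h1).le
    calc (k : ℝ) * (Real.pi / m) ≤ m * (Real.pi / m) := by gcongr
      _ = Real.pi := by field_simp

theorem sinQuot_two_mul {m : ℕ} (h0 : m ≠ 0) : sinQuot m (2 * m) = 0 := by
  have hm : (m : ℝ) ≠ 0 := by exact_mod_cast h0
  have : ((2 * m : ℕ) : ℝ) * (Real.pi / m) = 2 * Real.pi := by push_cast; field_simp
  simp only [sinQuot, if_neg h0, this, Real.sin_two_pi, zero_div]

theorem sinQuot_two_mul_add_one {m : ℕ} (h0 : m ≠ 0) (h1 : m ≠ 1) :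
    sinQuot m (2 * m + 1) = 1 := by
  have hm : (m : ℝ) ≠ 0 := by exact_mod_cast h0
  have : ((2 * m + 1 : ℕ) : ℝ) * (Real.pi / m) = Real.pi / m + 2 * Real.pi := by
    push_cast; field_simp; ring
  simp only [sinQuot, if_neg h0, this, Real.sin_add_two_pi]
  exact div_self (sin_pi_div_pos h0 h1).ne'

/-! ### The geometric representation -/

/-- The coroot `α_s^∨`: the linear form with `α_t ↦ -2 cos (π / m(s,t))`. For `m(s,t) = ∞`, encoded
as `0`, division by zero gives `cos 0 = 1`, hence the usual value `-2`. -/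
noncomputable def coroot {B : Type*} (M : CoxeterMatrix B) (s : B) : (B →₀ ℝ) →ₗ[ℝ] ℝ :=
  Finsupp.linearCombination ℝ (fun t => -(2 * Real.cos (Real.pi / M s t)))

/-- The simple reflection `v ↦ v - ⟨v, α_s^∨⟩ α_s` of the geometric representation, where `α_s` is
the standard basis vector `Finsupp.single s 1`. -/
noncomputable def simpleRefl {B : Type*} (M : CoxeterMatrix B) (s : B) :
    Module.End ℝ (B →₀ ℝ) :=
  Module.preReflection (Finsupp.single s 1) (coroot M s)

theorem coroot_single {B : Type*} (M : CoxeterMatrix B) (s t : B) :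
    coroot M s (Finsupp.single t 1) = -(2 * Real.cos (Real.pi / M s t)) := by
  simp [coroot]

theorem coroot_self {B : Type*} (M : CoxeterMatrix B) (s : B) :
    coroot M s (Finsupp.single s 1) = 2 := by
  simp [coroot]

theorem simpleRefl_apply {B : Type*} (M : CoxeterMatrix B) (s : B) (v : B →₀ ℝ) :
    simpleRefl M s v = v - coroot M s v • Finsupp.single s 1 :=
  Module.preReflection_apply _ _ _

theorem simpleRefl_self {B : Type*} (M : CoxeterMatrix B) (s : B) :
    simpleRefl M s (Finsupp.single s 1) = -Finsupp.single s 1 :=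
  Module.preReflection_apply_self (coroot_self M s)

theorem simpleRefl_mul_self {B : Type*} (M : CoxeterMatrix B) (s : B) :
    simpleRefl M s * simpleRefl M s = 1 :=
  LinearMap.ext fun v => Module.involutive_preReflection (coroot_self M s) v

theorem simpleRefl_single {B : Type*} (M : CoxeterMatrix B) (s t : B) :
    simpleRefl M s (Finsupp.single t 1) =
      Finsupp.single t 1 + (2 * Real.cos (Real.pi / M s t)) • Finsupp.single s 1 := by
  rw [simpleRefl_apply, coroot_single, neg_smul, sub_neg_eq_add]

theorem simpleRefl_pow_apply {B : Type*} (M : CoxeterMatrix B) {s t : B} (hst : s ≠ t) (n : ℕ) :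
    ((simpleRefl M s * simpleRefl M t) ^ n) (Finsupp.single s 1) =
      sinQuot (M s t) (2 * n + 1) • Finsupp.single s 1 +
        sinQuot (M s t) (2 * n) • Finsupp.single t 1 := by
  induction n with
  | zero => simp [sinQuot_zero, sinQuot_one (M.off_diagonal s t hst)]
  | succ n ih =>
    rw [pow_succ', Module.End.mul_apply, ih, Module.End.mul_apply]
    simp only [map_add, map_smul, simpleRefl_self, simpleRefl_single, map_neg, M.symmetric t s]
    rw [show 2 * (n + 1) + 1 = (2 * n + 1) + 2 by ring, show 2 * (n + 1) = 2 * n + 2 by ring,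
      sinQuot_add_two _ (2 * n + 1), sinQuot_add_two _ (2 * n)]
    module

theorem simpleRefl_isLiftable {B : Type*} (M : CoxeterMatrix B) :
    M.IsLiftable (simpleRefl M) := by
  intro s t
  by_cases hst : s = t
  · subst hst
    simp [simpleRefl_mul_self]
  by_cases h0 : M s t = 0
  · simp [h0]
  have h1 := M.off_diagonal s t hst
  set g := simpleRefl M s * simpleRefl M t with hg
  have hgs : (g ^ M s t) (Finsupp.single s 1) = Finsupp.single s 1 := by
    rw [simpleRefl_pow_apply M hst, sinQuot_two_mul h0, sinQuot_two_mul_add_one h0 h1]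
    simp
  have hgt : (g ^ M s t) (Finsupp.single t 1) = Finsupp.single t 1 := by
    -- the opposite product fixes `α_t`, and it is inverse to `g`
    have h := simpleRefl_pow_apply M (Ne.symm hst) (M t s)
    rw [M.symmetric t s, sinQuot_two_mul h0, sinQuot_two_mul_add_one h0 h1, one_smul,
      zero_smul, add_zero] at h
    have h' : g * (simpleRefl M t * simpleRefl M s) = 1 := by
      rw [hg, mul_assoc, ← mul_assoc (simpleRefl M t), simpleRefl_mul_self, one_mul,
        simpleRefl_mul_self]
    have h'' : (simpleRefl M t * simpleRefl M s) * g = 1 := by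
      rw [hg, mul_assoc, ← mul_assoc (simpleRefl M s), simpleRefl_mul_self, one_mul,
        simpleRefl_mul_self]
    have hc : Commute g (simpleRefl M t * simpleRefl M s) := h'.trans h''.symm
    have hp : g ^ M s t * (simpleRefl M t * simpleRefl M s) ^ M s t = 1 := by
      rw [← hc.mul_pow, h', one_pow]
    conv_lhs => rw [← h]
    rw [← Module.End.mul_apply, hp, Module.End.one_apply]
  ext1 u
  apply LinearMap.ext_ring
  simp only [LinearMap.comp_apply, Finsupp.lsingle_apply, Module.End.one_apply]
  set z : B →₀ ℝ := Finsupp.single u 1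
  set c := Real.cos (Real.pi / M s t) with hc
  -- the span of `α_s`, `α_t` is nondegenerate since `cos² ≠ 1`
  have hdet : 1 - c ^ 2 ≠ 0 := by
    have := Real.sin_sq_add_cos_sq (Real.pi / M s t)
    have h2 := sin_pi_div_pos h0 h1
    rw [← hc] at this
    nlinarith
  set a := (coroot M s z + c * coroot M t z) / (2 * (1 - c ^ 2)) with ha
  set b := (coroot M t z + c * coroot M s z) / (2 * (1 - c ^ 2)) with hb
  set y := z - a • Finsupp.single s 1 - b • Finsupp.single t 1 with hy
  have hys : coroot M s y = 0 := by
    simp only [hy, map_sub, map_smul, coroot_self, coroot_single, smul_eq_mul, ← hc]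
    rw [ha, hb]
    field_simp
    ring
  have hyt : coroot M t y = 0 := by
    simp only [hy, map_sub, map_smul, coroot_self, coroot_single, smul_eq_mul, M.symmetric t s,
      ← hc]
    rw [ha, hb]
    field_simp
    ring
  have hgy : g y = y := by
    rw [hg, Module.End.mul_apply, simpleRefl_apply M t, hyt, zero_smul, sub_zero,
      simpleRefl_apply, hys, zero_smul, sub_zero]
  have hgy' : (g ^ M s t) y = y := by
    rw [Module.End.pow_apply]
    exact Function.iterate_fixed hgy _
  have hz : z = y + a • Finsupp.single s 1 + b • Finsupp.single t 1 := by
    rw [hy]; module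
  rw [hz, map_add, map_add, map_smul, map_smul, hgs, hgt, hgy']

/-- The geometric representation of a Coxeter group. -/
noncomputable def geomRep {B G : Type*} [Group G] {M : CoxeterMatrix B} (cs : CoxeterSystem M G) :
    G →* Module.End ℝ (B →₀ ℝ) :=
  cs.lift ⟨simpleRefl M, simpleRefl_isLiftable M⟩

theorem geomRep_simple {B G : Type*} [Group G] {M : CoxeterMatrix B} (cs : CoxeterSystem M G)
    (s : B) : geomRep cs (cs.simple s) = simpleRefl M s :=
  cs.lift_apply_simple _ s

/-! ### Faithfulness -/

/-- The orbit of `α_s` under the dihedral group `⟨s, t⟩`, along alternating words ending in `t`. -/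
theorem geomRep_alternatingWord {B G : Type*} [Group G] {M : CoxeterMatrix B}
    (cs : CoxeterSystem M G) {s t : B} (hst : s ≠ t) (k : ℕ) :
    geomRep cs (cs.wordProd (CoxeterSystem.alternatingWord s t k)) (Finsupp.single s 1) =
      if Even k then
        sinQuot (M s t) (k + 1) • Finsupp.single s 1 + sinQuot (M s t) k • Finsupp.single t 1
      else
        sinQuot (M s t) k • Finsupp.single s 1 + sinQuot (M s t) (k + 1) • Finsupp.single t 1 := by
  induction k with
  | zero => simp [CoxeterSystem.alternatingWord, sinQuot_zero,
      sinQuot_one (M.off_diagonal s t hst)]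
  | succ k ih =>
    rw [CoxeterSystem.alternatingWord_succ', cs.wordProd_cons, map_mul, Module.End.mul_apply, ih]
    by_cases hk : Even k
    · have hk' : ¬ Even (k + 1) := by simpa [Nat.even_add_one] using hk
      simp only [if_pos hk, if_neg hk', geomRep_simple, map_add, map_smul, simpleRefl_self,
        simpleRefl_single, M.symmetric t s]
      rw [sinQuot_add_two]
      module
    · have hk' : Even (k + 1) := by simpa [Nat.even_add_one] using hk
      simp only [if_neg hk, if_pos hk', geomRep_simple, map_add, map_smul, simpleRefl_self,
        simpleRefl_single]
      rw [sinQuot_add_two]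
      module

/-- Factorization of `w` along the dihedral subgroup `⟨s, t⟩`: if `s` is not a right descent of `w`
but `t` is, then `w = v a` where `a` is the alternating word in `s, t` with `k < m(s,t)` letters
ending in `t`, `v` is shorter than `w`, and neither `s` nor `t` is a right descent of `v`.
Such a `v` arises by taking `k` maximal with `ℓ(w) = ℓ(v) + k`. -/
theorem exists_dihedral_factorization {B G : Type*} [Group G] {M : CoxeterMatrix B}
    (cs : CoxeterSystem M G) {w : G} {s t : B} (hs : ¬ cs.IsRightDescent w s)
    (ht : cs.IsRightDescent w t) :
    ∃ (k : ℕ) (v : G), w = v * cs.wordProd (CoxeterSystem.alternatingWord s t k) ∧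
      cs.length v < cs.length w ∧ (M s t = 0 ∨ k < M s t) ∧
      ¬ cs.IsRightDescent v s ∧ ¬ cs.IsRightDescent v t := by
  classical
  let P : ℕ → Prop := fun k => ∃ v : G,
    w = v * cs.wordProd (CoxeterSystem.alternatingWord s t k) ∧ cs.length w = cs.length v + k
  have hlen (k : ℕ) : cs.length (cs.wordProd (CoxeterSystem.alternatingWord s t k)) ≤ k := by
    simpa using cs.length_wordProd_le (CoxeterSystem.alternatingWord s t k)
  have hP1 : P 1 := by
    refine ⟨w * cs.simple t, by simp [CoxeterSystem.alternatingWord], ?_⟩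
    rw [cs.isRightDescent_iff] at ht
    exact ht.symm
  have hpos : 1 ≤ cs.length w := by
    obtain ⟨v, _, hv⟩ := hP1
    lia
  obtain ⟨k, hk⟩ : ∃ k, k = Nat.findGreatest P (cs.length w) := ⟨_, rfl⟩
  have hPk : P k := hk ▸ Nat.findGreatest_spec hpos hP1
  have hk1 : 1 ≤ k := hk ▸ Nat.le_findGreatest hpos hP1
  have hmax : ¬ P (k + 1) := by
    intro h
    obtain ⟨v, _, hv⟩ := id h
    exact Nat.findGreatest_is_greatest (hk ▸ Nat.lt_succ_self k)
      (show k + 1 ≤ cs.length w by lia) h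
  obtain ⟨v, hwv, hl⟩ := hPk
  obtain ⟨j, rfl⟩ : ∃ j, k = j + 1 := ⟨k - 1, by lia⟩
  have hy : ¬ cs.IsRightDescent v (if Even (j + 1) then t else s) := by
    intro hd
    rw [cs.isRightDescent_iff] at hd
    refine hmax ⟨v * cs.simple (if Even (j + 1) then t else s), ?_, by lia⟩
    rw [CoxeterSystem.alternatingWord_succ' s t (j + 1), cs.wordProd_cons, ← mul_assoc,
      cs.simple_mul_simple_cancel_right, hwv]
  have hx : ¬ cs.IsRightDescent v (if Even j then t else s) := by
    intro hd
    rw [cs.isRightDescent_iff] at hd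
    have : cs.length w ≤ cs.length (v * cs.simple (if Even j then t else s)) + j := by
      rw [hwv, CoxeterSystem.alternatingWord_succ' s t j, cs.wordProd_cons, ← mul_assoc]
      exact (cs.length_mul_le _ _).trans (by gcongr; exact hlen j)
    lia
  refine ⟨j + 1, v, hwv, by lia, ?_, ?_, ?_⟩
  · by_contra! hcon
    obtain ⟨hM, hle⟩ := hcon
    have hred : cs.IsReduced (CoxeterSystem.alternatingWord s t (j + 1)) := by
      have h1 := cs.length_mul_le v (cs.wordProd (CoxeterSystem.alternatingWord s t (j + 1)))
      rw [← hwv] at h1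
      have h2 := hlen (j + 1)
      unfold CoxeterSystem.IsReduced
      rw [CoxeterSystem.length_alternatingWord]
      lia
    have hjM : j + 1 = M s t := by
      by_contra hne
      exact cs.not_isReduced_alternatingWord s t hM (by lia) hred
    -- by the braid relation the alternating word may be taken to end in `s`
    have hbr : cs.wordProd (CoxeterSystem.alternatingWord s t (j + 1)) =
        cs.wordProd (CoxeterSystem.alternatingWord s t j) * cs.simple s := by
      have := cs.wordProd_braidWord_eq s t
      rw [CoxeterSystem.braidWord, CoxeterSystem.braidWord, M.symmetric t s, ← hjM,
        CoxeterSystem.alternatingWord_succ t s, cs.wordProd_concat] at this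
      exact this
    apply hs
    unfold CoxeterSystem.IsRightDescent
    have h1 : w * cs.simple s = v * cs.wordProd (CoxeterSystem.alternatingWord s t j) := by
      rw [hwv, hbr, ← mul_assoc, cs.simple_mul_simple_cancel_right]
    have h2 := cs.length_mul_le v (cs.wordProd (CoxeterSystem.alternatingWord s t j))
    have h3 := hlen j
    rw [h1]
    lia
  all_goals
    by_cases hj : Even j
    · have hj' : ¬ Even (j + 1) := by simpa [Nat.even_add_one] using hj
      rw [if_pos hj] at hx
      rw [if_neg hj'] at hy
      assumption
    · have hj' : Even (j + 1) := by simpa [Nat.even_add_one] using hj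
      rw [if_neg hj] at hx
      rw [if_pos hj'] at hy
      assumption

/-- If `ℓ(ws) > ℓ(w)` then `w α_s` is a nonnegative combination of simple roots. -/
theorem geomRep_nonneg {B G : Type*} [Group G] {M : CoxeterMatrix B}
    (cs : CoxeterSystem M G) (w : G) (s : B) (hs : ¬ cs.IsRightDescent w s) :
    0 ≤ geomRep cs w (Finsupp.single s 1) := by
  induction hn : cs.length w using Nat.strong_induction_on generalizing w s with
  | _ n ih =>
  by_cases hw : w = 1
  · subst hw
    simp
  obtain ⟨t, ht⟩ := cs.exists_rightDescent_of_ne_one hw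
  have hst : s ≠ t := by
    rintro rfl
    exact hs ht
  obtain ⟨k, v, hwv, hlt, hk, hvs, hvt⟩ := exists_dihedral_factorization cs hs ht
  have h1 := M.off_diagonal s t hst
  have hps := ih _ (hn ▸ hlt) v s hvs rfl
  have hpt := ih _ (hn ▸ hlt) v t hvt rfl
  have hc0 : 0 ≤ sinQuot (M s t) k := sinQuot_nonneg h1 (by lia)
  have hc1 : 0 ≤ sinQuot (M s t) (k + 1) := sinQuot_nonneg h1 (by lia)
  rw [hwv, map_mul, Module.End.mul_apply, geomRep_alternatingWord cs hst]
  split_ifs <;> rw [map_add, map_smul, map_smul] <;>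
    exact add_nonneg (smul_nonneg ‹_› ‹_›) (smul_nonneg ‹_› ‹_›)

theorem geomRep_faithful {B G : Type*} [Group G] {M : CoxeterMatrix B}
    (cs : CoxeterSystem M G) {w : G} (hw : geomRep cs w = 1) : w = 1 := by
  by_contra hne
  obtain ⟨s, hs⟩ := cs.exists_rightDescent_of_ne_one hne
  have h := geomRep_nonneg cs (w * cs.simple s) s
    (cs.isRightDescent_iff_not_isRightDescent_mul.mp hs)
  rw [map_mul, hw, one_mul, geomRep_simple, simpleRefl_self] at h
  have := h s
  simp at this
  linarith

/-! ### A 2-adic filtration -/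

theorem cos_pi_div_two_pow_sq (k : ℕ) :
    (2 * Real.cos (Real.pi / (2 ^ (k + 1) : ℕ))) ^ 2 =
      2 + 2 * Real.cos (Real.pi / (2 ^ k : ℕ)) := by
  have : Real.pi / (2 ^ k : ℕ) = 2 * (Real.pi / (2 ^ (k + 1) : ℕ)) := by
    push_cast
    rw [pow_succ]
    field_simp
  rw [this, Real.cos_two_mul]
  ring

theorem isIntegral_two_cos (k : ℕ) :
    IsIntegral ℤ (2 * Real.cos (Real.pi / (2 ^ k : ℕ))) := by
  have h2 : IsIntegral ℤ (2 : ℝ) := by exact_mod_cast isIntegral_algebraMap (R := ℤ) (x := 2)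
  induction k with
  | zero => simpa using h2
  | succ k ih =>
    refine IsIntegral.of_pow (n := 2) (by norm_num) ?_
    rw [cos_pi_div_two_pow_sq]
    exact h2.add ih

/-- In a subring of `ℝ` containing `2 cos (π / 2^k)`, a power of this element is divisible by `2`:
the numbers `θ_k = 2 cos (π / 2^k)` satisfy `θ_{k+1}² = 2 + θ_k` and `θ_0 = -2`. -/
theorem two_cos_mem_radical (R : Subalgebra ℤ ℝ) (k : ℕ) (x : R)
    (hx : (x : ℝ) = 2 * Real.cos (Real.pi / (2 ^ k : ℕ))) :
    x ∈ (Ideal.span {(2 : R)}).radical := by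
  have h2 : (2 : R) ∈ (Ideal.span {(2 : R)}).radical :=
    Ideal.le_radical (Ideal.subset_span rfl)
  induction k generalizing x with
  | zero =>
    have : x = -2 := by
      apply Subtype.ext
      have h2c : ((-2 : R) : ℝ) = -2 := rfl
      rw [hx, h2c]
      simp
    rw [this]
    exact neg_mem h2
  | succ k ih =>
    have h := ih (x ^ 2 - 2) (by
      have h2c : ((2 : R) : ℝ) = 2 := rfl
      rw [AddSubgroupClass.coe_sub, SubmonoidClass.coe_pow, hx, cos_pi_div_two_pow_sq, h2c]
      ring)
    have h' : x ^ 2 ∈ (Ideal.span {(2 : R)}).radical := by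
      simpa using add_mem h h2
    exact (Ideal.radical_isRadical _) ⟨2, h'⟩

/-- A filtration of a subring of `ℝ` by the powers of an ideal that contains `2` and the given
numbers `2 cos (π / 2^k)`, with zero intersection by Krull's theorem. -/
theorem exists_filtration (F : Set ℝ) (hF : F.Finite)
    (hc : ∀ c ∈ F, c = 2 ∨ ∃ k : ℕ, c = 2 * Real.cos (Real.pi / (2 ^ k : ℕ))) :
    ∃ J : ℕ → AddSubgroup ℝ, Antitone J ∧ (1 : ℝ) ∈ J 0 ∧
      (∀ j, ∀ x ∈ J j, 2 * x ∈ J (j + 1)) ∧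
      (∀ c ∈ F, ∀ j, ∀ x ∈ J j, c * x ∈ J (j + 1)) ∧
      ∀ x, (∀ j, x ∈ J j) → x = 0 := by
  have h2int : IsIntegral ℤ (2 : ℝ) := by exact_mod_cast isIntegral_algebraMap (R := ℤ) (x := 2)
  let R : Subalgebra ℤ ℝ := Algebra.adjoin ℤ F
  have hRint : R ≤ integralClosure ℤ ℝ := by
    apply Algebra.adjoin_le
    intro c hcF
    rcases hc c hcF with rfl | ⟨k, rfl⟩
    · exact h2int
    · exact isIntegral_two_cos k
  have : IsNoetherianRing R := by
    have hfg : R.FG := ⟨hF.toFinset, by simp [R]⟩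
    exact isNoetherianRing_of_fg hfg
  let I : Ideal R := (Ideal.span {(2 : R)}).radical
  have h2I : (2 : R) ∈ I := Ideal.le_radical (Ideal.subset_span rfl)
  have hI : I ≠ ⊤ := by
    intro htop
    -- otherwise `1/2` would be an algebraic integer
    have h : (1 : R) ∈ Ideal.span {(2 : R)} := by
      rw [Ideal.radical_eq_top.mp htop]
      trivial
    obtain ⟨r, hr⟩ := Ideal.mem_span_singleton'.mp h
    have hr' : (r : ℝ) * 2 = 1 := congrArg Subtype.val hr
    have hr2 : (r : ℝ) = algebraMap ℚ ℝ (1 / 2) := by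
      have : (r : ℝ) = 1 / 2 := by linarith
      rw [this]
      simp
    have hint : IsIntegral ℤ (r : ℝ) := hRint r.2
    rw [hr2, isIntegral_algebraMap_iff (algebraMap ℚ ℝ).injective,
      IsIntegrallyClosed.isIntegral_iff] at hint
    obtain ⟨y, hy⟩ := hint
    have hy2 : (y : ℚ) * 2 = 1 := by
      rw [eq_intCast] at hy
      rw [hy]
      norm_num
    have hy3 : y * 2 = 1 := by exact_mod_cast hy2
    lia
  have hinf := Ideal.iInf_pow_eq_bot_of_isDomain I hI
  have hmul : ∀ c : R, c ∈ I → ∀ j, ∀ x ∈ (I ^ j).toAddSubgroup.map R.val.toAddMonoidHom,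
      (c : ℝ) * x ∈ (I ^ (j + 1)).toAddSubgroup.map R.val.toAddMonoidHom := by
    rintro c hcI j _ ⟨x, hx, rfl⟩
    refine ⟨c * x, ?_, by simp⟩
    rw [pow_succ']
    exact Ideal.mul_mem_mul hcI hx
  refine ⟨fun j => (I ^ j).toAddSubgroup.map R.val.toAddMonoidHom, ?_, ?_, ?_, ?_, ?_⟩
  · intro i j hij
    exact AddSubgroup.map_mono (fun x hx => Ideal.pow_le_pow_right hij hx)
  · exact ⟨1, by simp, by simp⟩
  · exact hmul 2 h2I
  · intro c hcF
    have hcR : c ∈ R := Algebra.subset_adjoin hcF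
    apply hmul ⟨c, hcR⟩
    rcases hc c hcF with rfl | ⟨k, rfl⟩
    · exact h2I
    · exact two_cos_mem_radical R k _ rfl
  · intro x hx
    obtain ⟨r, _, rfl⟩ := hx 0
    have hr : r ∈ ⨅ j, I ^ j := by
      rw [Ideal.mem_iInf]
      intro j
      obtain ⟨r', hr', h⟩ := hx j
      have : r' = r := Subtype.ext h
      exact this ▸ hr'
    rw [hinf, Ideal.mem_bot] at hr
    simp [hr]

/-! ### Elements of odd order -/

/-- Every group element acts trivially on each graded piece of the coordinatewise filtration, since
multiplication by any coefficient of a coroot moves `J j` into `J (j + 1)`. -/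
theorem geomRep_sub_mem {B G : Type*} [Group G] {M : CoxeterMatrix B}
    (cs : CoxeterSystem M G) (J : ℕ → AddSubgroup ℝ) (hJ : Antitone J)
    (hc : ∀ s t : B, ∀ j, ∀ x ∈ J j, 2 * Real.cos (Real.pi / M s t) * x ∈ J (j + 1))
    (w : G) (j : ℕ) (u : B →₀ ℝ) (hu : ∀ b, u b ∈ J j) (b : B) :
    (geomRep cs w u - u) b ∈ J (j + 1) := by
  induction w using cs.simple_induction_left generalizing b with
  | one => simp
  | mul_simple_left w s ih =>
    set v := geomRep cs w u with hv
    have hvJ : ∀ b, v b ∈ J j := by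
      intro b
      have := add_mem (hJ (Nat.le_succ j) (ih b)) (hu b)
      simpa using this
    have hcor : coroot M s v ∈ J (j + 1) := by
      rw [coroot, Finsupp.linearCombination_apply]
      refine sum_mem fun t _ => ?_
      have := neg_mem (hc s t j _ (hvJ t))
      convert this using 1
      simp only [smul_eq_mul]
      ring
    have hsplit : (geomRep cs (cs.simple s * w) u - u) b =
        (v - u) b - coroot M s v * (Finsupp.single s (1 : ℝ)) b := by
      rw [map_mul, Module.End.mul_apply, geomRep_simple, ← hv, simpleRefl_apply]
      simp only [Finsupp.sub_apply, Finsupp.smul_apply, smul_eq_mul]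
      ring
    rw [hsplit]
    refine sub_mem (ih b) ?_
    classical
    rw [Finsupp.single_apply]
    split_ifs
    · simpa using hcor
    · simp

theorem eq_one_of_odd_pow {B G : Type*} [Group G] {M : CoxeterMatrix B} [Finite B]
    (cs : CoxeterSystem M G) (hM : ∀ s t, M s t = 0 ∨ ∃ k : ℕ, M s t = 2 ^ k)
    {w : G} {n : ℕ} (hn : Odd n) (hw : w ^ n = 1) : w = 1 := by
  obtain ⟨J, hJ, h1, h2, hc, h0⟩ := exists_filtration
    (Set.range fun p : B × B => 2 * Real.cos (Real.pi / M p.1 p.2)) (Set.finite_range _) (by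
      rintro _ ⟨⟨s, t⟩, rfl⟩
      rcases hM s t with h | ⟨k, h⟩
      · left
        simp [h]
      · right
        exact ⟨k, by simp only [h]⟩)
  have hc' : ∀ s t : B, ∀ j, ∀ x ∈ J j, 2 * Real.cos (Real.pi / M s t) * x ∈ J (j + 1) :=
    fun s t => hc _ ⟨(s, t), rfl⟩
  have hmem := geomRep_sub_mem cs J hJ hc'
  apply geomRep_faithful cs
  ext1 b
  apply LinearMap.ext_ring
  simp only [LinearMap.comp_apply, Finsupp.lsingle_apply, Module.End.one_apply]
  rw [← sub_eq_zero]
  set u := geomRep cs w (Finsupp.single b 1) - Finsupp.single b 1 with hu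
  have hsum : ∑ i ∈ Finset.range n, geomRep cs (w ^ i) u = 0 := by
    have := geom_sum_mul (geomRep cs w) n
    rw [← map_pow, hw, map_one, sub_self] at this
    have h := LinearMap.congr_fun this (Finsupp.single b 1)
    simpa [Module.End.mul_apply, LinearMap.sum_apply, hu] using h
  have huJ : ∀ j, ∀ a, u a ∈ J j := by
    intro j
    induction j with
    | zero =>
      intro a
      apply hJ (Nat.le_succ 0)
      apply hmem
      intro a
      classical
      rw [Finsupp.single_apply]
      split_ifs
      · exact h1
      · exact zero_mem _
    | succ j ih =>
      intro a
      -- modulo the next step of the filtration, the vanishing sum is `n • u`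
      have hnu : (n : ℝ) * u a ∈ J (j + 1) := by
        have h : ∑ i ∈ Finset.range n, (geomRep cs (w ^ i) u - u) a ∈ J (j + 1) :=
          sum_mem fun i _ => hmem (w ^ i) j u ih a
        rw [← Finsupp.finsetSum_apply, Finset.sum_sub_distrib, hsum] at h
        simpa using h
      obtain ⟨k, rfl⟩ := hn
      have h2u := nsmul_mem (h2 j _ (ih a)) k
      have := sub_mem hnu h2u
      convert this using 1
      push_cast
      rw [nsmul_eq_mul]
      ring
  ext a
  exact h0 _ fun j => huJ j a

/-- A finite rank Coxeter group all of whose finite edge labels are powers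
of 2 has no nontrivial elements of finite odd order. -/
theorem no_nontrivial_odd_order (m : W → W → ℕ) (S : Set W)
    (hcs : IsCoxeterSystemOn m S) (hfin : S.Finite)
    (hpow : ∀ s ∈ S, ∀ t ∈ S, s ≠ t → m s t = 0 ∨ ∃ k : ℕ, m s t = 2 ^ k) :
    ∀ w : W, 0 < orderOf w → Odd (orderOf w) → w = 1 := by
  obtain ⟨cm, cs, -, hM⟩ := hcs
  have := hfin.to_subtype
  intro w _ hodd
  refine eq_one_of_odd_pow cs (fun s t => ?_) hodd (pow_orderOf_eq_one w)
  by_cases hst : s = t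
  · subst hst
    exact Or.inr ⟨0, by simp⟩
  · rw [hM]
    exact hpow s s.2 t t.2 (fun h => hst (Subtype.ext h))
end
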